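/- The saturation property fails for SO(2l+1), l ≥ 2: with λ_1 = λ_2 = λ_3 = ω_1 (the standard representation's highest weight), the sum 3ω_1 lies in the root lattice and the SL(2)-analogous invariant space (V(2ω_1) ⊗ V(2ω_1) ⊗ V(2ω_1))^G under doubling is nonzero for m = 2 in a suitable configuration, but more simply: (V(ω_1) ⊗ V(ω_1) ⊗ V(ω_1))^G = 0 while (V(2ω_1) ⊗ V(2ω_1) ⊗ V(2ω_1))^G ≠ 0, even though ω_1 + ω_1 + ω_1 ∈ Q. -/

import Mathlib

/-!
The saturation property fails for `SO(2l+1)`, `l ≥ 2`: with `λ₁ = λ₂ = λ₃ = ω₁` (the highest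
weight of the standard representation `V`) one has `ω₁ + ω₁ + ω₁ ∈ Q` (indeed `ω₁ = e₁` is a
root), and `(V(2ω₁) ⊗ V(2ω₁) ⊗ V(2ω₁))^G ≠ 0` (the case `m = 2`), yet
`(V(ω₁) ⊗ V(ω₁) ⊗ V(ω₁))^G = 0`.

`V(2ω₁)` is encoded as any irreducible representation possessing a highest weight vector of
weight `2ω₁ = (2,0,…,0)`.
-/

open scoped TensorProduct
open Matrix

section OrthFramework

/-- The Gram matrix (antidiagonal `1`s) of the split non-degenerate quadratic form on `ℂ^m`;
over `ℂ` every non-degenerate quadratic form is equivalent to this one. -/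
def antidiagJ (m : ℕ) : Matrix (Fin m) (Fin m) ℂ :=
  Matrix.of fun i j => if (i : ℕ) + (j : ℕ) + 1 = m then 1 else 0

/-- The orthogonal group `O(Ψ) ⊆ GL(m, ℂ)` of the split form `Ψ`. -/
def orthGroup (m : ℕ) : Subgroup (GL (Fin m) ℂ) where
  carrier := {g | ((g : GL (Fin m) ℂ) : Matrix (Fin m) (Fin m) ℂ)ᵀ * antidiagJ m *
      ((g : GL (Fin m) ℂ) : Matrix (Fin m) (Fin m) ℂ) = antidiagJ m}
  one_mem' := by simp
  mul_mem' := by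
    intro a b ha hb
    simp only [Set.mem_setOf_eq, Units.val_mul, Matrix.transpose_mul] at *
    calc (↑b)ᵀ * (↑a)ᵀ * antidiagJ m * ((↑a : Matrix (Fin m) (Fin m) ℂ) * ↑b)
        = (↑b)ᵀ * ((↑a)ᵀ * antidiagJ m * ↑a) * ↑b := by
          simp only [Matrix.mul_assoc]
      _ = antidiagJ m := by rw [ha, hb]
  inv_mem' := by
    intro g hg
    simp only [Set.mem_setOf_eq] at *
    set A : Matrix (Fin m) (Fin m) ℂ := ((g : GL (Fin m) ℂ) : Matrix (Fin m) (Fin m) ℂ)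
    set B : Matrix (Fin m) (Fin m) ℂ := ((g⁻¹ : GL (Fin m) ℂ) : Matrix (Fin m) (Fin m) ℂ)
    have hgg' : A * B = 1 := by
      simp only [A, B, ← Units.val_mul, mul_inv_cancel, Units.val_one]
    calc Bᵀ * antidiagJ m * B
        = Bᵀ * (Aᵀ * antidiagJ m * A) * B := by rw [hg]
      _ = (A * B)ᵀ * antidiagJ m * (A * B) := by
          rw [Matrix.transpose_mul]; simp only [Matrix.mul_assoc]
      _ = antidiagJ m := by rw [hgg']; simp
  
/-- The special orthogonal group `SO(Ψ) ⊆ GL(m, ℂ)`. -/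
def specialOrthGroup (m : ℕ) : Subgroup (GL (Fin m) ℂ) :=
  orthGroup m ⊓ (Matrix.GeneralLinearGroup.det : GL (Fin m) ℂ →* ℂˣ).ker

variable {m : ℕ} {G : Subgroup (GL (Fin m) ℂ)}
variable {V W : Type*} [AddCommGroup V] [Module ℂ V] [AddCommGroup W] [Module ℂ W]

/-- The standard (matrix) representation of a subgroup `G ⊆ GL(m, ℂ)` on `ℂ^m`. -/
noncomputable def stdRep (G : Subgroup (GL (Fin m) ℂ)) : Representation ℂ G (Fin m → ℂ) where
  toFun g := Matrix.toLin' ((g : GL (Fin m) ℂ) : Matrix (Fin m) (Fin m) ℂ)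
  map_one' := by simp; rfl
  map_mul' g h := by
    simp [Units.val_mul, Matrix.toLin'_mul]
    rfl

/-- An element of `G ⊆ GL(m, ℂ)` lying in the diagonal torus. -/
def GIsDiag (g : G) : Prop :=
  ∀ i j, i ≠ j → ((g : GL (Fin m) ℂ) : Matrix (Fin m) (Fin m) ℂ) i j = 0

/-- An element of `G ⊆ GL(m, ℂ)` lying in the upper-triangular unipotent subgroup. -/
def GIsUniUpper (g : G) : Prop :=
  (∀ i, ((g : GL (Fin m) ℂ) : Matrix (Fin m) (Fin m) ℂ) i i = 1) ∧
    ∀ i j : Fin m, j < i → ((g : GL (Fin m) ℂ) : Matrix (Fin m) (Fin m) ℂ) i j = 0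

/-- `ρ` is irreducible. -/
def RepIsIrred (ρ : Representation ℂ G V) : Prop :=
  (∃ v : V, v ≠ 0) ∧ ∀ p : Submodule ℂ V, (∀ g, ∀ x ∈ p, ρ g x ∈ p) → p = ⊥ ∨ p = ⊤

/-- The space of `G`-invariants of `ρ` is nonzero. -/
def RepHasInvariant (ρ : Representation ℂ G V) : Prop := ∃ v : V, v ≠ 0 ∧ ∀ g, ρ g v = v

/-- The tensor product of two representations, with the diagonal `G`-action. -/
noncomputable def tensorRep2 (ρ : Representation ℂ G V) (σ : Representation ℂ G W) :
    Representation ℂ G (V ⊗[ℂ] W) := ρ.tprod σ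

end OrthFramework

section BWeights

variable {l : ℕ} {G : Subgroup (GL (Fin (2 * l + 1)) ℂ)}
variable {V : Type*} [AddCommGroup V] [Module ℂ V]

/-- For `G ⊆ GL(2l+1, ℂ)` of type `B_l` (the split (special) orthogonal group), a weight
`a ∈ ℤ^l` of the diagonal torus `diag(d₁, …, d_l, 1, d_l⁻¹, …, d₁⁻¹)` evaluates on a diagonal
element through the first `l` diagonal entries: `g ↦ ∏ᵢ gᵢᵢ^{aᵢ}`.  `v` is a highest weight
vector of weight `a`: nonzero, fixed by the unipotent radical of the Borel, torus-eigenvector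
with character `a`. -/
def BIsHWVector (ρ : Representation ℂ G V) (a : Fin l → ℤ) (v : V) : Prop :=
  v ≠ 0 ∧ (∀ g, GIsUniUpper g → ρ g v = v) ∧
    ∀ g, GIsDiag g → ρ g v =
      (∏ i : Fin l, ((g : GL (Fin (2 * l + 1)) ℂ) : Matrix (Fin (2 * l + 1)) (Fin (2 * l + 1)) ℂ)
        (Fin.castLE (by omega) i) (Fin.castLE (by omega) i) ^ a i) • v

/-- The irreducible representation `V(a)` of highest weight `a` occurs in `ρ`. -/
def BOccurs (ρ : Representation ℂ G V) (a : Fin l → ℤ) : Prop := ∃ v, BIsHWVector ρ a v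

/-- The roots of type `B_l`, as integer vectors: `±eᵢ ± eⱼ (i ≠ j)` and `±eᵢ`. -/
def BRootsZ (l : ℕ) : Set (Fin l → ℤ) :=
  {v | (∃ i j : Fin l, i ≠ j ∧
          (v = Pi.single i 1 - Pi.single j 1 ∨ v = Pi.single i 1 + Pi.single j 1 ∨
           v = -(Pi.single i 1) - Pi.single j 1)) ∨
       (∃ i : Fin l, v = Pi.single i 1 ∨ v = -(Pi.single i 1))}

end BWeights

/-!
The standard cube has no invariant because, in an orthogonal basis `b` of `ℂ^m`, the product of the
reflections in two basis vectors lies in `SO(m)`, and for `m > 3` each `bᵢ ⊗ bⱼ ⊗ bₖ` is negated by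
such a product.

Let `v` be a highest weight vector of weight `2ω₁` in an irreducible `ρ`, let `e` be the highest
weight vector of the standard representation and let `f` be its opposite, `B(e, f) = 1`. The
stabilizer of the line `ℂ e` acts on `v` through the square of its character on `e`, and
projecting `ρ(g) v` to the top weight space of the torus of the pair `e`, `f` gives `B(f, g e)²`.
A linear relation `∑ c_g ρ(g) v = 0` therefore makes the quadratic form of
`A = ∑ c_g B(g e, ·) g e` vanish on every isotropic vector, so `A` is a multiple of the identity,
and it has trace `0`, so `A = 0`. Hence `ρ(g) v ↦ B(g e, ·) g e` extends to an equivariant linear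
map `Ψ` into `End(ℂ^m)`. The form `tr(Ψ u Ψ u')` makes `ρ` self-dual, and `tr(Ψ u Ψ u' Ψ u'')` is
then a nonzero invariant of the cube.

The weights of a torus are read off from the action of its element at `2`. That an Eichler
transformation `N` strictly raises them, up to the identity, follows from `D N D⁻¹ = N²` for that
element `D`, together with the unipotence of `N`, which is conjugate to all of its powers.
-/

section Operators

open Polynomial

variable {K U : Type*} [Field K] [AddCommGroup U] [Module K U]

lemma mem_sup_of_apply_sub_smul_mem {ι : Type*} {D : Module.End K U} {μ : ι → K} {s : Set ι}
    {c : K} (hc : ∀ i ∈ s, μ i ≠ c) {z : U} (hz : D z - c • z ∈ ⨆ i ∈ s, D.eigenspace (μ i)) :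
    z ∈ D.eigenspace c ⊔ ⨆ i ∈ s, D.eigenspace (μ i) := by
  have hle : ⨆ i ∈ s, D.eigenspace (μ i) ≤
      (⨆ i ∈ s, D.eigenspace (μ i)).map (D - c • (1 : Module.End K U)) := by
    refine iSup₂_le fun i hi x hx => ⟨(μ i - c)⁻¹ • x,
      Submodule.smul_mem _ _ (Submodule.mem_iSup_of_mem i (Submodule.mem_iSup_of_mem hi hx)), ?_⟩
    simp only [LinearMap.sub_apply, LinearMap.smul_apply, Module.End.one_apply, map_smul,
      Module.End.mem_eigenspace_iff.1 hx]
    rw [← sub_smul, inv_smul_smul₀ (sub_ne_zero.2 (hc i hi))]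
  obtain ⟨y, hy, hyz⟩ := hle hz
  refine Submodule.mem_sup.2 ⟨z - y, ?_, y, hy, sub_add_cancel z y⟩
  simp only [LinearMap.sub_apply, LinearMap.smul_apply, Module.End.one_apply] at hyz
  rw [Module.End.mem_eigenspace_iff, map_sub, smul_sub, sub_eq_sub_iff_sub_eq_sub, ← hyz]

lemma mul_aeval_of_mul_eq_sq_mul {D N : Module.End K U} (hDN : D * N = N ^ 2 * D) (q : K[X]) :
    D * aeval (N - 1) q = aeval (N - 1) (q.comp ((X + 1) ^ 2 - 1)) * D := by
  have hX : SemiconjBy D (N - 1) (N ^ 2 - 1) := SemiconjBy.sub_right hDN (SemiconjBy.one_right D)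
  rw [aeval_comp]
  induction q using Polynomial.induction_on' with
  | add p q hp hq => rw [map_add, map_add, mul_add, add_mul, hp, hq]
  | monomial k a =>
    simpa [aeval_monomial] using
      (SemiconjBy.mul_right (Algebra.commutes a D).symm (hX.pow_right k)).eq

lemma X_pow_succ_dvd_comp_sub {k : ℕ} {q : K[X]} (hq : X ^ k ∣ q) :
    X ^ (k + 1) ∣ q.comp ((X + 1) ^ 2 - 1) - (2 : K) ^ k • q := by
  obtain ⟨r, rfl⟩ := hq
  have hcomp : (X ^ k * r).comp ((X + 1) ^ 2 - 1) - (2 : K) ^ k • (X ^ k * r) =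
      X ^ k * ((X + 2) ^ k * r.comp ((X + 1) ^ 2 - 1) - (2 : K) ^ k • r) := by
    rw [mul_comp, X_pow_comp, show ((X : K[X]) + 1) ^ 2 - 1 = X * (X + 2) by ring, mul_pow,
      mul_assoc, mul_sub, mul_smul_comm]
  rw [hcomp, pow_succ]
  refine mul_dvd_mul_left _ (X_dvd_iff.2 ?_)
  simp [coeff_zero_eq_eval_zero, eval_comp]

lemma aeval_sub_one_apply_mem_iSup_eigenspace [CharZero K] {D N : Module.End K U}
    (hN : IsNilpotent (N - 1)) (hDN : D * N = N ^ 2 * D) {ν : K} (hν : ν ≠ 0) {w : U}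
    (hw : w ∈ D.eigenspace ν) {k : ℕ} {q : K[X]} (hq : X ^ k ∣ q) :
    aeval (N - 1) q w ∈ ⨆ j ≥ k, D.eigenspace (ν * 2 ^ j) := by
  obtain ⟨d, hd⟩ := hN
  induction hi : d - k generalizing k q with
  | zero =>
    obtain ⟨r, rfl⟩ := hq
    simp [pow_eq_zero_of_le (Nat.le_of_sub_eq_zero hi) hd]
  | succ i ih =>
    have hD : D (aeval (N - 1) q w) - (ν * 2 ^ k) • aeval (N - 1) q w =
        ν • aeval (N - 1) (q.comp ((X + 1) ^ 2 - 1) - (2 : K) ^ k • q) w := by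
      rw [← Module.End.mul_apply, mul_aeval_of_mul_eq_sq_mul hDN, Module.End.mul_apply,
        Module.End.mem_eigenspace_iff.1 hw, map_smul, map_sub, map_smul, LinearMap.sub_apply,
        LinearMap.smul_apply, smul_sub, smul_smul]
    have hmem := mem_sup_of_apply_sub_smul_mem (c := ν * 2 ^ k) (s := Set.Ici (k + 1))
      (μ := fun j : ℕ => ν * 2 ^ j) (fun j hj h => ?_) (hD ▸ Submodule.smul_mem _ ν
        (ih (X_pow_succ_dvd_comp_sub hq) (by omega)))
    · refine SetLike.le_def.1 (sup_le ?_ (biSup_mono fun j hj => (Nat.le_succ k).trans hj)) hmem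
      exact le_iSup₂_of_le k le_rfl le_rfl
    · have hpow : 2 ^ j = 2 ^ k := by exact_mod_cast mul_left_cancel₀ hν h
      exact absurd hj (by simp [Nat.pow_right_injective le_rfl hpow])

/-- With `n = N - 1` one has `D n = n (n + 2) D`, so modulo higher powers of `n` the vector
`n ^ k w` is an eigenvector of `D` with eigenvalue `2 ^ k ν`. -/
lemma apply_sub_self_mem_iSup_eigenspace [CharZero K] {D N : Module.End K U}
    (hN : IsNilpotent (N - 1)) (hDN : D * N = N ^ 2 * D) {n : ℤ} {w : U}
    (hw : w ∈ D.eigenspace (2 ^ n)) : N w - w ∈ ⨆ k > n, D.eigenspace (2 ^ k) := by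
  have h := aeval_sub_one_apply_mem_iSup_eigenspace hN hDN (zpow_ne_zero n two_ne_zero) hw
    (dvd_of_eq (pow_one X))
  rw [aeval_X, LinearMap.sub_apply, Module.End.one_apply] at h
  refine SetLike.le_def.1 (iSup₂_le fun j hj => ?_) h
  rw [← zpow_natCast, ← zpow_add₀ two_ne_zero]
  exact le_iSup₂_of_le (n + j) (by lia) le_rfl

lemma isOfFinOrder_of_forall_pow_mem {s : Set K} (hs : s.Finite) {μ : K} (hμ : μ ≠ 0)
    (h : ∀ r : ℕ, 0 < r → μ ^ r ∈ s) : IsOfFinOrder μ := by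
  lift μ to Kˣ using hμ.isUnit
  rw [Units.isOfFinOrder_val, ← finite_powers]
  refine (((hs.insert 1).preimage Units.val_injective.injOn).subset ?_)
  rintro _ ⟨r, rfl⟩
  rcases Nat.eq_zero_or_pos r with rfl | hr
  · simp
  · exact Or.inr (by simpa using h r hr)

lemma isNilpotent_sub_one_of_spectrum_subset [IsAlgClosed K] [FiniteDimensional K U]
    {N : Module.End K U} (h : spectrum K N ⊆ {1}) : IsNilpotent (N - 1) := by
  have hroots : N.charpoly.roots = Multiset.replicate (Multiset.card N.charpoly.roots) 1 :=
    Multiset.eq_replicate_card.2 fun μ hμ => h <| Module.End.hasEigenvalue_iff_mem_spectrum.1 <|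
      (N.hasEigenvalue_iff_isRoot_charpoly μ).2 (isRoot_of_mem_roots hμ)
  have hchar := (IsAlgClosed.splits N.charpoly).eq_prod_roots_of_monic N.charpoly_monic
  rw [hroots, Multiset.map_replicate, Multiset.prod_replicate] at hchar
  refine ⟨Multiset.card N.charpoly.roots, ?_⟩
  have hCH := N.aeval_self_charpoly
  rw [hchar, map_pow, map_sub, aeval_X, map_one, map_one] at hCH
  exact hCH

lemma isNilpotent_sub_one_of_isConj_pow [IsAlgClosed K] [FiniteDimensional K U]
    {N : (Module.End K U)ˣ} (h : ∀ r : ℕ, 0 < r → IsConj N (N ^ r)) :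
    IsNilpotent (N - 1 : Module.End K U) := by
  set σ := spectrum K (N : Module.End K U)
  have hpow : ∀ r : ℕ, 0 < r → (· ^ r) '' σ = σ := fun r hr => by
    obtain ⟨D, hD⟩ := isConj_iff.1 (h r hr)
    have hconj := congrArg (fun u : (Module.End K U)ˣ => spectrum K (u : Module.End K U)) hD
    simp only [Units.val_mul, Units.val_pow_eq_pow_val, spectrum.units_conjugate] at hconj
    rw [← spectrum.map_pow_of_pos _ hr, ← hconj]
  have hfin : σ.Finite := Module.End.finite_spectrum _
  have hord : ∀ μ ∈ σ, IsOfFinOrder μ := fun μ hμ =>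
    isOfFinOrder_of_forall_pow_mem hfin
      (fun h0 => (spectrum.zero_notMem_iff K).2 N.isUnit (h0 ▸ hμ))
      fun r hr => hpow r hr ▸ Set.mem_image_of_mem _ hμ
  refine isNilpotent_sub_one_of_spectrum_subset ?_
  have hR : 0 < ∏ μ ∈ hfin.toFinset, orderOf μ :=
    Finset.prod_pos fun μ hμ => (hord μ (hfin.mem_toFinset.1 hμ)).orderOf_pos
  change σ ⊆ {1}
  rw [← hpow _ hR]
  rintro _ ⟨μ, hμ, rfl⟩
  exact orderOf_dvd_iff_pow_eq_one.1 (Finset.dvd_prod_of_mem orderOf (hfin.mem_toFinset.2 hμ))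

lemma exists_linearMap_apply_eq {W ι : Type*} [AddCommGroup W] [Module K W] {v : ι → U} {w : ι → W}
    (hv : Submodule.span K (Set.range v) = ⊤)
    (hvw : ∀ t, Finsupp.linearCombination K v t = 0 → Finsupp.linearCombination K w t = 0) :
    ∃ Ψ : U →ₗ[K] W, ∀ i, Ψ (v i) = w i := by
  obtain ⟨s, hs⟩ := (Finsupp.linearCombination K v).exists_rightInverse_of_surjective
    ((Finsupp.range_linearCombination K).trans hv)
  refine ⟨Finsupp.linearCombination K w ∘ₗ s, fun i => ?_⟩
  have hker := hvw (s (v i) - Finsupp.single i 1) (by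
    rw [map_sub, Finsupp.linearCombination_single, one_smul, sub_eq_zero]
    exact LinearMap.congr_fun hs (v i))
  rwa [map_sub, Finsupp.linearCombination_single, one_smul, sub_eq_zero] at hker

end Operators

section BilinearForms

variable {K V : Type*} [Field K] [AddCommGroup V] [Module K V] {B : LinearMap.BilinForm K V}

/-- The Eichler transformation (Siegel transvection) attached to an isotropic vector `e` and a
vector `y` orthogonal to `e`; it is an isometry of `B` fixing `e`. -/
noncomputable def eichlerMap (B : LinearMap.BilinForm K V) (e y : V) : Module.End K V :=
  LinearMap.id + (B e).smulRight y - (B y).smulRight e - (B y y / 2) • (B e).smulRight e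

lemma eichlerMap_apply (e y x : V) :
    eichlerMap B e y x = x + B e x • y - B y x • e - (B y y / 2 * B e x) • e := by
  simp [eichlerMap, mul_smul]

lemma eichlerMap_zero (e : V) : eichlerMap B e 0 = 1 := by
  ext x
  simp [eichlerMap_apply]

lemma apply_eichlerMap [NeZero (2 : K)] (hB : B.IsSymm) {e y : V} (he : B e e = 0)
    (hy : B e y = 0) (x z : V) : B (eichlerMap B e y x) (eichlerMap B e y z) = B x z := by
  simp only [eichlerMap_apply, map_add, map_sub, map_smul, LinearMap.add_apply,
    LinearMap.sub_apply, LinearMap.smul_apply, smul_eq_mul, he, hy, hB.eq y e, hB.eq x e,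
    hB.eq x y]
  field_simp
  ring

lemma eichlerMap_mul_eichlerMap [NeZero (2 : K)] (hB : B.IsSymm) {e y y' : V} (he : B e e = 0)
    (hy : B e y = 0) (hy' : B e y' = 0) :
    eichlerMap B e y * eichlerMap B e y' = eichlerMap B e (y + y') := by
  ext x
  simp only [Module.End.mul_apply, eichlerMap_apply, map_add, map_sub, map_smul,
    LinearMap.add_apply, he, hy', hB.eq y e, hy, hB.eq y' y]
  match_scalars <;> field_simp <;> ring

/-- The map scaling `e` by `c` and `f` by `c⁻¹` and fixing every vector orthogonal to both, for a
hyperbolic pair `e`, `f`. -/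
noncomputable def pairTorusMap (B : LinearMap.BilinForm K V) (e f : V) (c : K) : Module.End K V :=
  LinearMap.id + (c - 1) • (B f).smulRight e + (c⁻¹ - 1) • (B e).smulRight f

lemma pairTorusMap_apply (e f : V) (c : K) (x : V) :
    pairTorusMap B e f c x = x + ((c - 1) * B f x) • e + ((c⁻¹ - 1) * B e x) • f := by
  simp [pairTorusMap, mul_smul]

lemma pairTorusMap_one (e f : V) : pairTorusMap B e f 1 = 1 := by
  ext x
  simp [pairTorusMap_apply]

lemma pairTorusMap_swap (e f : V) (c : K) : pairTorusMap B f e c = pairTorusMap B e f c⁻¹ := by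
  ext x
  rw [pairTorusMap_apply, pairTorusMap_apply, inv_inv, add_right_comm]

/-- A pair of isotropic vectors with `B e f = 1`. -/
structure IsHyperbolicPair (B : LinearMap.BilinForm K V) (e f : V) : Prop where
  left : B e e = 0
  right : B f f = 0
  pair : B e f = 1

namespace IsHyperbolicPair

variable {e f : V}

lemma symm (h : IsHyperbolicPair B e f) (hB : B.IsSymm) : IsHyperbolicPair B f e :=
  ⟨h.right, h.left, hB.eq f e ▸ h.pair⟩

lemma left_ne_zero (h : IsHyperbolicPair B e f) : e ≠ 0 := by
  rintro rfl
  simpa using h.pair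

lemma apply_pairTorusMap (h : IsHyperbolicPair B e f) (hB : B.IsSymm) {c : K} (hc : c ≠ 0)
    (x z : V) : B (pairTorusMap B e f c x) (pairTorusMap B e f c z) = B x z := by
  simp only [pairTorusMap_apply, map_add, map_smul, LinearMap.add_apply, LinearMap.smul_apply,
    smul_eq_mul, h.left, h.right, h.pair, hB.eq f e, hB.eq x e, hB.eq x f]
  field_simp
  ring

lemma pairTorusMap_mul_pairTorusMap (h : IsHyperbolicPair B e f) (hB : B.IsSymm) (c d : K) :
    pairTorusMap B e f c * pairTorusMap B e f d = pairTorusMap B e f (c * d) := by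
  ext x
  simp only [Module.End.mul_apply, pairTorusMap_apply, map_add, map_smul, h.left, h.right, h.pair,
    hB.eq f e, mul_inv]
  module

lemma exists_of_orthogonal_anisotropic [IsAlgClosed K] [NeZero (2 : K)] (hB : B.IsSymm) {u w : V}
    (hu : B u u ≠ 0) (hw : B w w ≠ 0) (huw : B u w = 0) :
    ∃ s t : K, IsHyperbolicPair B (u + s • w) (t • (u - s • w)) ∧ s ≠ 0 ∧ t ≠ 0 := by
  obtain ⟨s, hs⟩ := IsAlgClosed.exists_pow_nat_eq (-(B u u / B w w)) two_pos
  have hsw : s ^ 2 * B w w = -B u u := by rw [hs]; field_simp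
  have h2 : (2 : K) ≠ 0 := two_ne_zero
  have hs0 : s ≠ 0 := by
    rintro rfl
    simp [hu] at hsw
  refine ⟨s, (2 * B u u)⁻¹, ⟨?_, ?_, ?_⟩, hs0, inv_ne_zero (mul_ne_zero h2 hu)⟩ <;>
    simp only [map_add, map_sub, map_smul, LinearMap.add_apply, LinearMap.sub_apply,
      LinearMap.smul_apply, smul_eq_mul, huw, hB.eq w u]
  · linear_combination hsw
  · linear_combination ((2 * B u u)⁻¹ ^ 2) * hsw
  · field_simp
    linear_combination -hsw

lemma exists_add_add_eq (h : IsHyperbolicPair B e f) (hB : B.IsSymm) (x : V) :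
    ∃ w, B e w = 0 ∧ B f w = 0 ∧ B f x • e + B e x • f + w = x := by
  refine ⟨x - B f x • e - B e x • f, ?_, ?_, by abel⟩ <;>
    simp [h.left, h.right, h.pair, hB.eq f e]

/-- For `w` orthogonal to `e` and `f` the vectors `e + s w - (s² B(w, w) / 2) f` are isotropic, so
`s ↦ C` of this vector is a polynomial vanishing identically. -/
lemma apply_of_orthogonal_of_isotropic [CharZero K] (h : IsHyperbolicPair B e f) (hB : B.IsSymm)
    {C : LinearMap.BilinForm K V} (hC : C.IsSymm) (hiso : ∀ x, B x x = 0 → C x x = 0) {w : V}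
    (hew : B e w = 0) (hfw : B f w = 0) : C e w = 0 ∧ C w w = C e f * B w w := by
  have hpoly : ∀ s : K, 2 * s * C e w + s ^ 2 * (C w w - C e f * B w w)
      - s ^ 3 * B w w * C f w = 0 := by
    intro s
    have hs := hiso (e + s • w - (s ^ 2 * (B w w / 2)) • f) (by
      simp only [map_add, map_sub, map_smul, LinearMap.add_apply, LinearMap.sub_apply,
        LinearMap.smul_apply, smul_eq_mul, h.left, h.right, h.pair, hB.eq f e, hew, hfw,
        hB.eq w e, hB.eq w f]
      ring)
    simp only [map_add, map_sub, map_smul, LinearMap.add_apply, LinearMap.sub_apply,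
      LinearMap.smul_apply, smul_eq_mul, hiso e h.left, hiso f h.right, hC.eq f e, hC.eq w e,
      hC.eq w f] at hs
    linear_combination hs
  constructor
  · linear_combination (8 * (hpoly 1 - hpoly (-1)) - (hpoly 2 - hpoly (-2))) / 24
  · linear_combination (hpoly 1 + hpoly (-1)) / 2

lemma eq_smul_of_isotropic [CharZero K] (h : IsHyperbolicPair B e f) (hB : B.IsSymm)
    {C : LinearMap.BilinForm K V} (hC : C.IsSymm) (hiso : ∀ x, B x x = 0 → C x x = 0) :
    C = C e f • B := by
  refine LinearMap.BilinForm.ext_of_isSymm hC (hB.smul _) fun x => ?_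
  obtain ⟨w, hew, hfw, hx⟩ := h.exists_add_add_eq hB x
  obtain ⟨hCew, hCww⟩ := h.apply_of_orthogonal_of_isotropic hB hC hiso hew hfw
  obtain ⟨hCfw, -⟩ := (h.symm hB).apply_of_orthogonal_of_isotropic hB hC hiso hfw hew
  generalize B f x = s, B e x = t at hx
  subst hx
  simp only [map_add, map_smul, LinearMap.add_apply, LinearMap.smul_apply, smul_eq_mul,
    hiso e h.left, hiso f h.right, hC.eq f e, hC.eq w e, hC.eq w f, hCew, hCfw, hCww, h.left,
    h.right, h.pair, hB.eq f e, hB.eq w e, hB.eq w f, hew, hfw]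
  ring

lemma eq_zero_of_trace_eq_zero_of_isotropic [CharZero K] [FiniteDimensional K V]
    (h : IsHyperbolicPair B e f) (hB : B.IsSymm) (hnd : B.Nondegenerate) {A : Module.End K V}
    (hA : ∀ x y, B x (A y) = B y (A x)) (hiso : ∀ x, B x x = 0 → B x (A x) = 0)
    (htr : LinearMap.trace K V A = 0) : A = 0 := by
  have hC := h.eq_smul_of_isotropic hB (C := B.compRight A) ⟨hA⟩ hiso
  set c := B e (A f)
  have hAc : A = c • LinearMap.id := by
    refine LinearMap.ext fun y => sub_eq_zero.1 (hnd.2 _ fun x => ?_)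
    simpa [sub_eq_zero] using LinearMap.congr_fun₂ hC x y
  have := nontrivial_of_ne e 0 h.left_ne_zero
  have hc : c = 0 := by
    rw [hAc, map_smul, LinearMap.trace_id, smul_eq_mul, mul_eq_zero] at htr
    exact htr.resolve_right (Nat.cast_ne_zero.2 Module.finrank_pos.ne')
  rw [hAc, hc, zero_smul]

end IsHyperbolicPair

/-- The endomorphism `z ↦ B(x, z) x`. -/
noncomputable def rankOne (B : LinearMap.BilinForm K V) (x : V) : Module.End K V :=
  (B x).smulRight x

lemma rankOne_apply (x z : V) : rankOne B x z = B x z • x := rfl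

lemma conj_rankOne_of_isometry {S T : Module.End K V} (hTS : T * S = 1)
    (hT : ∀ x y, B (T x) (T y) = B x y) (x : V) : T * rankOne B x * S = rankOne B (T x) := by
  ext z
  have hz : T (S z) = z := LinearMap.congr_fun hTS z
  nth_rw 2 [← hz]
  simp [rankOne_apply, hT]

lemma rankOne_mul_smulRight (φ : Module.Dual K V) (x y : V) :
    rankOne B x * φ.smulRight y = B x y • φ.smulRight x := by
  ext z
  simp [rankOne_apply, smul_smul, mul_comm]

section Trace

variable [FiniteDimensional K V]

lemma trace_rankOne (x : V) : LinearMap.trace K V (rankOne B x) = B x x :=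
  LinearMap.trace_smulRight _ _

lemma trace_rankOne_mul (x y : V) :
    LinearMap.trace K V (rankOne B x * rankOne B y) = B x y * B y x := by
  rw [rankOne.eq_def B y, rankOne_mul_smulRight, map_smul, LinearMap.trace_smulRight, smul_eq_mul]

lemma trace_rankOne_mul_mul (x y z : V) :
    LinearMap.trace K V (rankOne B x * (rankOne B y * rankOne B z)) =
      B y z * (B x y * B z x) := by
  rw [rankOne.eq_def B z, rankOne_mul_smulRight, mul_smul_comm, rankOne_mul_smulRight, map_smul,
    map_smul, LinearMap.trace_smulRight, smul_eq_mul, smul_eq_mul]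

end Trace

end BilinearForms

section SplitForm

variable {m : ℕ}

/-- The symmetric bilinear form on `ℂ^m` with Gram matrix `antidiagJ m`. -/
noncomputable def splitForm (m : ℕ) : LinearMap.BilinForm ℂ (Fin m → ℂ) :=
  Matrix.toBilin' (antidiagJ m)

lemma splitForm_single_left (i : Fin m) (y : Fin m → ℂ) :
    splitForm m (Pi.single i 1) y = y i.rev := by
  rw [splitForm, Matrix.toBilin'_apply', single_one_dotProduct, Matrix.mulVec, dotProduct,
    Finset.sum_eq_single i.rev]
  · rw [antidiagJ, Matrix.of_apply, if_pos (by rw [Fin.val_rev]; omega), one_mul]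
  · intro j _ hj
    rw [antidiagJ, Matrix.of_apply,
      if_neg fun h => hj (Fin.ext (by rw [Fin.val_rev]; omega)), zero_mul]
  · simp

lemma isSymm_splitForm : (splitForm m).IsSymm := by
  refine Matrix.isSymm_toBilin'_iff_isSymm.2 (Matrix.IsSymm.ext fun i j => ?_)
  simp only [antidiagJ, Matrix.of_apply, add_comm (j : ℕ)]

lemma splitForm_comm (x y : Fin m → ℂ) : splitForm m x y = splitForm m y x :=
  isSymm_splitForm.eq x y

lemma splitForm_single_right (x : Fin m → ℂ) (i : Fin m) :
    splitForm m x (Pi.single i 1) = x i.rev := by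
  rw [splitForm_comm, splitForm_single_left]

lemma nondegenerate_splitForm : (splitForm m).Nondegenerate :=
  isSymm_splitForm.isRefl.nondegenerate_iff_separatingRight.2 fun y hy => funext fun i => by
    simpa [splitForm_single_left] using hy (Pi.single i.rev 1)

lemma exists_splitForm_ne_zero {x : Fin m → ℂ} (hx : x ≠ 0) : ∃ z, splitForm m z x ≠ 0 := by
  by_contra! h
  exact hx (nondegenerate_splitForm.2 x h)

lemma det_antidiagJ_ne_zero : (antidiagJ m).det ≠ 0 :=
  LinearMap.BilinForm.nondegenerate_toBilin'_iff_det_ne_zero.1 nondegenerate_splitForm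

lemma transpose_mul_antidiagJ_mul_iff {M : Matrix (Fin m) (Fin m) ℂ} :
    Mᵀ * antidiagJ m * M = antidiagJ m ↔
      ∀ x y, splitForm m (M *ᵥ x) (M *ᵥ y) = splitForm m x y := by
  rw [← Matrix.toBilin'.injective.eq_iff, ← Matrix.toBilin'_comp, LinearMap.ext_iff₂]
  rfl

lemma splitForm_stdRep (g : specialOrthGroup m) (x y : Fin m → ℂ) :
    splitForm m (stdRep _ g x) (stdRep _ g y) = splitForm m x y :=
  transpose_mul_antidiagJ_mul_iff.1 g.2.1 x y

lemma splitForm_stdRep_left (g : specialOrthGroup m) (x y : Fin m → ℂ) :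
    splitForm m (stdRep _ g x) y = splitForm m x (stdRep _ g⁻¹ y) := by
  rw [← splitForm_stdRep g x, Representation.self_inv_apply]

lemma stdRep_injective {G : Subgroup (GL (Fin m) ℂ)} : Function.Injective (stdRep G) :=
  fun _ _ h => Subtype.ext (Units.ext (Matrix.toLin'.injective h))

lemma coe_apply_eq_stdRep {G : Subgroup (GL (Fin m) ℂ)} (g : G) (i j : Fin m) :
    ((g : GL (Fin m) ℂ) : Matrix (Fin m) (Fin m) ℂ) i j = stdRep G g (Pi.single j 1) i :=
  (congrFun (Matrix.mulVec_single_one _ j) i).symm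

/-- The determinant of an isometry is `±1`, so its square has determinant `1`. -/
lemma exists_stdRep_eq_mul_self {h : Module.End ℂ (Fin m → ℂ)}
    (hh : ∀ x y, splitForm m (h x) (h y) = splitForm m x y) :
    ∃ g : specialOrthGroup m, stdRep _ g = h * h := by
  set M := LinearMap.toMatrix' (h * h)
  have hM : ∀ x, M *ᵥ x = h (h x) := LinearMap.toMatrix'_mulVec (h * h)
  have hdet : M.det = 1 := by
    have hJ := congrArg Matrix.det <| transpose_mul_antidiagJ_mul_iff.2 fun x y => by
      rw [LinearMap.toMatrix'_mulVec, LinearMap.toMatrix'_mulVec, hh x y]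
    rw [det_mul, det_mul, det_transpose] at hJ
    rw [show M = h.toMatrix' * h.toMatrix' from LinearMap.toMatrix'_mul h h, det_mul]
    exact mul_right_cancel₀ det_antidiagJ_ne_zero (by linear_combination hJ)
  refine ⟨⟨Matrix.GeneralLinearGroup.mkOfDetNeZero M (by simp [hdet]),
    transpose_mul_antidiagJ_mul_iff.2 fun x y => ?_, MonoidHom.mem_ker.2 (Units.ext hdet)⟩,
    LinearMap.ext hM⟩
  change splitForm m (M *ᵥ x) (M *ᵥ y) = _
  rw [hM, hM, hh, hh]

end SplitForm

section Transformations

variable {m : ℕ} {e f y y' x : Fin m → ℂ} {c : ℂ}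

/-- The Eichler transformation as an element of the special orthogonal group; a junk value unless
`e` is isotropic and orthogonal to `y`. -/
noncomputable def eichler (e y : Fin m → ℂ) : specialOrthGroup m :=
  Function.invFun (stdRep _) (eichlerMap (splitForm m) e y)

lemma stdRep_eichler (he : splitForm m e e = 0) (hy : splitForm m e y = 0) :
    stdRep _ (eichler e y) = eichlerMap (splitForm m) e y := by
  have hy2 : splitForm m e ((2 : ℂ)⁻¹ • y) = 0 := by rw [map_smul, hy, smul_zero]
  obtain ⟨g, hg⟩ := exists_stdRep_eq_mul_self (apply_eichlerMap isSymm_splitForm he hy2)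
  refine Function.invFun_eq ⟨g, ?_⟩
  rw [hg, eichlerMap_mul_eichlerMap isSymm_splitForm he hy2 hy2, ← add_smul, ← two_mul,
    mul_inv_cancel₀ two_ne_zero, one_smul]

lemma eichler_mul_eichler (he : splitForm m e e = 0) (hy : splitForm m e y = 0)
    (hy' : splitForm m e y' = 0) : eichler e y * eichler e y' = eichler e (y + y') := by
  refine stdRep_injective ?_
  rw [map_mul, stdRep_eichler he hy, stdRep_eichler he hy',
    stdRep_eichler he (by rw [map_add, hy, hy', add_zero]),
    eichlerMap_mul_eichlerMap isSymm_splitForm he hy hy']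

lemma eichler_zero (he : splitForm m e e = 0) : eichler e 0 = 1 := by
  refine stdRep_injective ?_
  rw [stdRep_eichler he (map_zero _), eichlerMap_zero, map_one]

lemma eichler_neg (he : splitForm m e e = 0) (hy : splitForm m e y = 0) :
    eichler e (-y) = (eichler e y)⁻¹ := by
  rw [eq_inv_iff_mul_eq_one, eichler_mul_eichler he (by rw [map_neg, hy, neg_zero]) hy,
    neg_add_cancel, eichler_zero he]

lemma eichler_pow (he : splitForm m e e = 0) (hy : splitForm m e y = 0) (n : ℕ) :
    eichler e y ^ n = eichler e ((n : ℂ) • y) := by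
  induction n with
  | zero => simp [eichler_zero he]
  | succ n ih =>
    rw [pow_succ, ih, eichler_mul_eichler he (by rw [map_smul, hy, smul_zero]) hy,
      Nat.cast_succ, add_smul, one_smul]

/-- `pairTorusMap` as an element of the special orthogonal group; a junk value unless `e`, `f` is a
hyperbolic pair and `c ≠ 0`. -/
noncomputable def pairTorus (e f : Fin m → ℂ) (c : ℂ) : specialOrthGroup m :=
  Function.invFun (stdRep _) (pairTorusMap (splitForm m) e f c)

namespace IsHyperbolicPair

lemma stdRep_pairTorus (h : IsHyperbolicPair (splitForm m) e f) (hc : c ≠ 0) :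
    stdRep _ (pairTorus e f c) = pairTorusMap (splitForm m) e f c := by
  obtain ⟨d, rfl⟩ := IsAlgClosed.exists_pow_nat_eq c two_pos
  obtain ⟨g, hg⟩ := exists_stdRep_eq_mul_self
    (h.apply_pairTorusMap isSymm_splitForm (pow_ne_zero_iff two_ne_zero |>.1 hc))
  exact Function.invFun_eq ⟨g, by rw [hg, h.pairTorusMap_mul_pairTorusMap isSymm_splitForm, sq]⟩

lemma pairTorus_swap (h : IsHyperbolicPair (splitForm m) e f) (hc : c ≠ 0) :
    pairTorus f e c = (pairTorus e f c)⁻¹ := by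
  have hc' := inv_ne_zero hc
  refine stdRep_injective ?_
  rw [(h.symm isSymm_splitForm).stdRep_pairTorus hc, pairTorusMap_swap, ← h.stdRep_pairTorus hc']
  refine congrArg _ (eq_inv_of_mul_eq_one_left (stdRep_injective ?_))
  rw [map_mul, h.stdRep_pairTorus hc, h.stdRep_pairTorus hc',
    h.pairTorusMap_mul_pairTorusMap isSymm_splitForm, inv_mul_cancel₀ hc, pairTorusMap_one, map_one]

lemma pairTorus_mul_eichler (h : IsHyperbolicPair (splitForm m) e f) (hc : c ≠ 0)
    (hey : splitForm m e y = 0) (hfy : splitForm m f y = 0) :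
    pairTorus e f c * eichler e y = eichler e (c • y) * pairTorus e f c := by
  refine stdRep_injective (LinearMap.ext fun x => ?_)
  rw [map_mul, map_mul, h.stdRep_pairTorus hc, stdRep_eichler h.left hey,
    stdRep_eichler h.left (by rw [map_smul, hey, smul_zero])]
  simp only [Module.End.mul_apply, eichlerMap_apply, pairTorusMap_apply, map_add, map_sub, map_smul,
    LinearMap.smul_apply, smul_eq_mul, h.left, h.pair, splitForm_comm f e, hey, hfy,
    splitForm_comm y e, splitForm_comm y f]
  match_scalars <;> field_simp <;> ring

lemma stdRep_pairTorus_left (h : IsHyperbolicPair (splitForm m) e f) (hc : c ≠ 0) :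
    stdRep _ (pairTorus e f c) e = c • e := by
  rw [h.stdRep_pairTorus hc, pairTorusMap_apply, h.left, splitForm_comm, h.pair]
  module

lemma stdRep_pairTorus_right (h : IsHyperbolicPair (splitForm m) e f) (hc : c ≠ 0) :
    stdRep _ (pairTorus e f c) f = c⁻¹ • f := by
  rw [h.stdRep_pairTorus hc, pairTorusMap_apply, h.right, h.pair]
  module

lemma stdRep_pairTorus_of_orthogonal (h : IsHyperbolicPair (splitForm m) e f) (hc : c ≠ 0)
    (hex : splitForm m e x = 0) (hfx : splitForm m f x = 0) :
    stdRep _ (pairTorus e f c) x = x := by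
  rw [h.stdRep_pairTorus hc, pairTorusMap_apply, hex, hfx]
  module

end IsHyperbolicPair

end Transformations

section Fixators

variable {m : ℕ}

/-- The pointwise stabilizer in the special orthogonal group of a set of vectors of `ℂ^m`. -/
def fixator (X : Set (Fin m → ℂ)) : Subgroup (specialOrthGroup m) where
  carrier := {g | ∀ x ∈ X, stdRep _ g x = x}
  one_mem' x _ := by rw [map_one, Module.End.one_apply]
  mul_mem' {g h} hg hh x hx := by rw [map_mul, Module.End.mul_apply, hh x hx, hg x hx]
  inv_mem' {g} hg x hx := by
    nth_rw 1 [← hg x hx]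
    exact (stdRep _).inv_self_apply g x

/-- The orthogonal complement of a set of vectors with respect to `splitForm`. -/
noncomputable def perp (X : Set (Fin m → ℂ)) : Submodule ℂ (Fin m → ℂ) :=
  ⨅ x ∈ X, LinearMap.ker (splitForm m x)

lemma mem_perp {X : Set (Fin m → ℂ)} {y : Fin m → ℂ} :
    y ∈ perp X ↔ ∀ x ∈ X, splitForm m x y = 0 := by
  simp [perp, Submodule.mem_iInf]

lemma mem_perp_insert_insert {X : Set (Fin m → ℂ)} {e f y : Fin m → ℂ} :
    y ∈ perp (insert e (insert f X)) ↔
      splitForm m e y = 0 ∧ splitForm m f y = 0 ∧ y ∈ perp X := by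
  simp [mem_perp]

lemma stdRep_mem_perp {X : Set (Fin m → ℂ)} {g : specialOrthGroup m} (hg : g ∈ fixator X)
    {x : Fin m → ℂ} (hx : x ∈ perp X) : stdRep _ g x ∈ perp X := by
  refine mem_perp.2 fun z hz => ?_
  rw [← hg z hz, splitForm_stdRep, mem_perp.1 hx z hz]

/-- A hyperbolic pair of `splitForm m` orthogonal to `X`. -/
structure IsHyperbolicPairIn (X : Set (Fin m → ℂ)) (e f : Fin m → ℂ) : Prop
    extends IsHyperbolicPair (splitForm m) e f where
  left_mem : e ∈ perp X
  right_mem : f ∈ perp X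

namespace IsHyperbolicPairIn

variable {X : Set (Fin m → ℂ)} {e f x y a : Fin m → ℂ} {c : ℂ} {g : specialOrthGroup m}

lemma symm (h : IsHyperbolicPairIn X e f) : IsHyperbolicPairIn X f e :=
  ⟨h.toIsHyperbolicPair.symm isSymm_splitForm, h.right_mem, h.left_mem⟩

lemma eichler_mem_fixator (h : IsHyperbolicPairIn X e f) (hy : y ∈ perp (insert e (insert f X))) :
    eichler e y ∈ fixator X := by
  obtain ⟨hey, -, hyX⟩ := mem_perp_insert_insert.1 hy
  intro x hx
  rw [stdRep_eichler h.left hey, eichlerMap_apply, splitForm_comm e, splitForm_comm y x,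
    mem_perp.1 hyX x hx, mem_perp.1 h.left_mem x hx]
  module

lemma stdRep_eichler_left (h : IsHyperbolicPairIn X e f) (hy : y ∈ perp (insert e (insert f X))) :
    stdRep _ (eichler e y) e = e := by
  obtain ⟨hey, -⟩ := mem_perp_insert_insert.1 hy
  rw [stdRep_eichler h.left hey, eichlerMap_apply, h.left, splitForm_comm, hey]
  module

lemma pairTorus_mem_fixator (h : IsHyperbolicPairIn X e f) (hc : c ≠ 0) :
    pairTorus e f c ∈ fixator X := fun x hx =>
  h.stdRep_pairTorus_of_orthogonal hc (by rw [splitForm_comm, mem_perp.1 h.left_mem x hx])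
    (by rw [splitForm_comm, mem_perp.1 h.right_mem x hx])

lemma exists_add_add_eq_of_mem_perp (h : IsHyperbolicPairIn X e f) (hx : x ∈ perp X) :
    ∃ w ∈ perp (insert e (insert f X)),
      splitForm m f x • e + splitForm m e x • f + w = x := by
  obtain ⟨w, hew, hfw, hw⟩ := h.exists_add_add_eq isSymm_splitForm x
  refine ⟨w, mem_perp_insert_insert.2 ⟨hew, hfw, ?_⟩, hw⟩
  rw [← sub_eq_of_eq_add' hw.symm]
  exact sub_mem hx <| add_mem (Submodule.smul_mem _ _ h.left_mem)
    (Submodule.smul_mem _ _ h.right_mem)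

lemma exists_eichler_right_eq_smul (h : IsHyperbolicPairIn X e f) (hx : x ∈ perp X)
    (hxx : splitForm m x x = 0) (hfx : splitForm m f x ≠ 0) :
    ∃ y ∈ perp (insert e (insert f X)), stdRep _ (eichler f y) x = splitForm m f x • e := by
  obtain ⟨w, hw, hwx⟩ := h.exists_add_add_eq_of_mem_perp hx
  obtain ⟨hew, hfw, -⟩ := mem_perp_insert_insert.1 hw
  have hpair (z) : splitForm m z x =
      splitForm m f x * splitForm m z e + splitForm m e x * splitForm m z f + splitForm m z w := by
    conv_lhs => rw [← hwx]
    simp only [map_add, map_smul, smul_eq_mul]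
  have hwx' : splitForm m w x = splitForm m w w := by
    rw [hpair w, splitForm_comm w e, splitForm_comm w f, hew, hfw]
    ring
  have hww : splitForm m w w = -(2 * splitForm m f x * splitForm m e x) := by
    rw [hpair x, splitForm_comm x e, splitForm_comm x f, splitForm_comm x w, hwx'] at hxx
    linear_combination hxx
  refine ⟨-(splitForm m f x)⁻¹ • w, Submodule.smul_mem _ _ hw, ?_⟩
  rw [stdRep_eichler h.right (by rw [map_smul, hfw, smul_zero]), eichlerMap_apply]
  simp only [map_smul, LinearMap.smul_apply, smul_eq_mul, hwx', hww]
  nth_rw 1 [← hwx]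
  match_scalars <;> field_simp <;> ring

lemma splitForm_right_stdRep_eichler (h : IsHyperbolicPairIn X e f)
    (hy : y ∈ perp (insert e (insert f X))) (x : Fin m → ℂ) :
    splitForm m f (stdRep _ (eichler e y) x) =
      splitForm m f x - splitForm m y x - splitForm m e x * (splitForm m y y / 2) := by
  obtain ⟨hey, hfy, -⟩ := mem_perp_insert_insert.1 hy
  rw [stdRep_eichler h.left hey, eichlerMap_apply]
  simp only [map_add, map_sub, map_smul, smul_eq_mul, hfy, splitForm_comm f e, h.pair]
  ring

lemma splitForm_left_stdRep_eichler (h : IsHyperbolicPairIn X e f)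
    (hy : y ∈ perp (insert e (insert f X))) (x : Fin m → ℂ) :
    splitForm m e (stdRep _ (eichler e y) x) = splitForm m e x := by
  nth_rw 1 [← h.stdRep_eichler_left hy]
  exact splitForm_stdRep _ _ _

lemma exists_eichler_left_ne_zero (h : IsHyperbolicPairIn X e f)
    (ha : a ∈ perp (insert e (insert f X))) (haa : splitForm m a a ≠ 0) {z : Fin m → ℂ}
    (hz : z ∈ perp X) (hzx : splitForm m z x ≠ 0) :
    ∃ y ∈ perp (insert e (insert f X)), splitForm m f (stdRep _ (eichler e y) x) ≠ 0 := by
  by_contra! H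
  have hy (y) (hy : y ∈ perp (insert e (insert f X))) :=
    (h.splitForm_right_stdRep_eichler hy x).symm.trans (H y hy)
  have hF : splitForm m f x = 0 := by simpa using hy 0 (zero_mem _)
  have hE : splitForm m e x = 0 := by
    have ha' := hy (-a) (neg_mem ha)
    simp only [map_neg, LinearMap.neg_apply, neg_neg] at ha'
    refine (mul_eq_zero.1 (?_ : splitForm m e x * splitForm m a a = 0)).resolve_right haa
    linear_combination 2 * hF - hy a ha - ha'
  obtain ⟨w, hw, hwz⟩ := h.exists_add_add_eq_of_mem_perp hz
  refine hzx ?_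
  rw [← hwz]
  simp only [map_add, map_smul, LinearMap.add_apply, LinearMap.smul_apply, hE, hF]
  simpa [hE, hF] using hy w hw

/-- Levi decomposition of the stabilizer of an isotropic line. -/
lemma exists_eq_pairTorus_mul_eichler_mul (h : IsHyperbolicPairIn X e f) (hg : g ∈ fixator X)
    (hc : c ≠ 0) (hge : stdRep _ g e = c • e) :
    ∃ y ∈ perp (insert e (insert f X)), ∃ k ∈ fixator (insert e (insert f X)),
      g = pairTorus e f c * eichler e y * k := by
  set t := pairTorus e f c
  have htX : t ∈ fixator X := h.pairTorus_mem_fixator hc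
  set g' := t⁻¹ * g with hg'
  have hg'X : g' ∈ fixator X := mul_mem (inv_mem htX) hg
  have hg'e : stdRep _ g' e = e := by
    rw [hg', map_mul, Module.End.mul_apply, hge, ← h.stdRep_pairTorus_left hc,
      Representation.inv_self_apply]
  have hg'f : splitForm m e (stdRep _ g' f) = 1 := by
    nth_rw 1 [← hg'e]
    rw [splitForm_stdRep, h.pair]
  obtain ⟨y, hy, hyf⟩ := h.symm.exists_eichler_right_eq_smul (stdRep_mem_perp hg'X h.right_mem)
    (by rw [splitForm_stdRep, h.right]) (by rw [hg'f]; exact one_ne_zero)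
  rw [hg'f, one_smul, ← Module.End.mul_apply, ← map_mul] at hyf
  rw [Set.insert_comm] at hy
  refine ⟨-y, neg_mem hy, eichler e y * g', ?_, ?_⟩
  · rintro x (rfl | rfl | hx)
    · rw [map_mul, Module.End.mul_apply, hg'e, h.stdRep_eichler_left hy]
    · exact hyf
    · exact mul_mem (h.eichler_mem_fixator hy) hg'X x hx
  · rw [eichler_neg h.left (mem_perp_insert_insert.1 hy).1, hg']
    group

end IsHyperbolicPairIn

end Fixators

section Weights

variable {m : ℕ} {U : Type*} [AddCommGroup U] [Module ℂ U]
  {ρ : Representation ℂ (specialOrthGroup m) U} {X : Set (Fin m → ℂ)} {e f y a : Fin m → ℂ}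
  {g : specialOrthGroup m} {v w : U} {n : ℤ} {p : ℕ} {c : ℂ}

lemma apply_inv_eq_smul_iff (hc : c ≠ 0) : ρ g⁻¹ w = c • w ↔ ρ g w = c⁻¹ • w := by
  rw [← (ρ.apply_bijective g).1.eq_iff, ρ.self_inv_apply, map_smul, eq_comm,
    eq_inv_smul_iff₀ hc]

lemma apply_eq_self_of_mul {k : specialOrthGroup m} (hk : ρ k v = v) (hkg : ρ (k * g) v = v) :
    ρ g v = v :=
  (ρ.apply_bijective k).1 <| by rw [← Module.End.mul_apply, ← map_mul, hkg, hk]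

/-- The space of weight `n` for the one-parameter torus `c ↦ pairTorus e f c`, encoded as an
eigenspace of its element at `c = 2`. -/
noncomputable def torusWeightSpace (ρ : Representation ℂ (specialOrthGroup m) U)
    (e f : Fin m → ℂ) (n : ℤ) : Submodule ℂ U :=
  Module.End.eigenspace (ρ (pairTorus e f 2)) (2 ^ n)

lemma mem_torusWeightSpace :
    w ∈ torusWeightSpace ρ e f n ↔ ρ (pairTorus e f 2) w = (2 : ℂ) ^ n • w :=
  Module.End.mem_eigenspace_iff

lemma iSupIndep_torusWeightSpace : iSupIndep (torusWeightSpace ρ e f) := by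
  refine (Module.End.eigenspaces_iSupIndep _).comp fun i j hij => ?_
  have h2 : (2 : ℝ) ^ i = 2 ^ j := Complex.ofReal_injective (by push_cast; exact hij)
  exact zpow_right_injective₀ two_pos (OfNat.ofNat_ne_one 2) h2

lemma torusWeightSpace_swap (h : IsHyperbolicPair (splitForm m) e f) (n : ℤ) :
    torusWeightSpace ρ f e n = torusWeightSpace ρ e f (-n) := by
  ext w
  rw [mem_torusWeightSpace, mem_torusWeightSpace, h.pairTorus_swap two_ne_zero,
    apply_inv_eq_smul_iff (zpow_ne_zero n two_ne_zero), _root_.zpow_neg]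

/-- The vector `v` transforms by the `p`-th power of the scaling factor under the stabilizer of the
line `ℂ e` in `fixator X`. -/
def IsLineEigenvector (ρ : Representation ℂ (specialOrthGroup m) U) (X : Set (Fin m → ℂ))
    (e : Fin m → ℂ) (p : ℕ) (v : U) : Prop :=
  ∀ g ∈ fixator X, ∀ c : ℂ, stdRep _ g e = c • e → ρ g v = c ^ p • v

lemma IsLineEigenvector.apply_apply_eq_smul (hv : IsLineEigenvector ρ X e p v)
    {t : specialOrthGroup m} (ht : t ∈ fixator X) (hg : g ∈ fixator X)
    (htg : stdRep _ t (stdRep _ g e) = c • stdRep _ g e) : ρ t (ρ g v) = c ^ p • ρ g v := by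
  have hconj := hv (g⁻¹ * t * g) (mul_mem (mul_mem (inv_mem hg) ht) hg) c (by
    simp only [map_mul, Module.End.mul_apply, htg, map_smul, Representation.inv_self_apply])
  simpa only [map_mul, Module.End.mul_apply, map_smul, ρ.self_inv_apply] using
    congrArg (ρ g) hconj

namespace IsHyperbolicPairIn

lemma isLineEigenvector (h : IsHyperbolicPairIn X e f)
    (hfix : ∀ k ∈ fixator (insert e (insert f X)), ρ k v = v)
    (htorus : ∀ c ≠ 0, ρ (pairTorus e f c) v = c ^ p • v)
    (heichler : ∀ y ∈ perp (insert e (insert f X)), ρ (eichler e y) v = v) :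
    IsLineEigenvector ρ X e p v := by
  intro g hg c hge
  have hc : c ≠ 0 := by
    rintro rfl
    rw [zero_smul, ← map_zero (stdRep _ g)] at hge
    exact h.left_ne_zero (((stdRep _).apply_bijective g).1 hge)
  obtain ⟨y, hy, k, hk, rfl⟩ := h.exists_eq_pairTorus_mul_eichler_mul hg hc hge
  rw [map_mul, map_mul, Module.End.mul_apply, Module.End.mul_apply, hfix k hk, heichler y hy,
    htorus c hc]

lemma mem_torusWeightSpace_of_isLineEigenvector (h : IsHyperbolicPairIn X e f)
    (hv : IsLineEigenvector ρ X e p v) : v ∈ torusWeightSpace ρ e f p :=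
  mem_torusWeightSpace.2 <| by
    rw [hv _ (h.pairTorus_mem_fixator two_ne_zero) _ (h.stdRep_pairTorus_left two_ne_zero),
      zpow_natCast]

lemma apply_mem_torusWeightSpace_neg (h : IsHyperbolicPairIn X e f)
    (hv : IsLineEigenvector ρ X e p v) (hg : g ∈ fixator X) (hge : stdRep _ g e = c • f) :
    ρ g v ∈ torusWeightSpace ρ e f (-p) := by
  rw [mem_torusWeightSpace, _root_.zpow_neg, zpow_natCast, ← inv_pow]
  refine hv.apply_apply_eq_smul (h.pairTorus_mem_fixator two_ne_zero) hg ?_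
  rw [hge, map_smul, h.stdRep_pairTorus_right two_ne_zero, smul_comm]

lemma apply_mem_torusWeightSpace_zero (h : IsHyperbolicPairIn X e f)
    (hv : IsLineEigenvector ρ X e p v) (hg : g ∈ fixator X)
    (hge : stdRep _ g e ∈ perp (insert e (insert f X))) : ρ g v ∈ torusWeightSpace ρ e f 0 := by
  obtain ⟨he, hf, -⟩ := mem_perp_insert_insert.1 hge
  rw [mem_torusWeightSpace, zpow_zero, ← one_pow (M := ℂ) p]
  refine hv.apply_apply_eq_smul (h.pairTorus_mem_fixator two_ne_zero) hg ?_
  rw [h.stdRep_pairTorus_of_orthogonal two_ne_zero he hf, one_smul]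

variable [FiniteDimensional ℂ U]

lemma isNilpotent_eichler_sub_one (h : IsHyperbolicPairIn X e f)
    (hy : y ∈ perp (insert e (insert f X))) : IsNilpotent (ρ (eichler e y) - 1) := by
  obtain ⟨hey, hfy, -⟩ := mem_perp_insert_insert.1 hy
  refine isNilpotent_sub_one_of_isConj_pow (N := ρ.toHomUnits (eichler e y)) fun r hr => ?_
  have hr0 : (r : ℂ) ≠ 0 := Nat.cast_ne_zero.2 hr.ne'
  rw [← map_pow]
  refine MonoidHom.map_isConj _ (isConj_iff.2 ⟨pairTorus e f r, ?_⟩)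
  rw [h.pairTorus_mul_eichler hr0 hey hfy, eichler_pow h.left hey, mul_inv_cancel_right]

lemma eichler_apply_sub_self_mem (h : IsHyperbolicPairIn X e f)
    (hy : y ∈ perp (insert e (insert f X))) (hw : w ∈ torusWeightSpace ρ e f n) :
    ρ (eichler e y) w - w ∈ ⨆ k > n, torusWeightSpace ρ e f k := by
  obtain ⟨hey, hfy, -⟩ := mem_perp_insert_insert.1 hy
  refine apply_sub_self_mem_iSup_eigenspace (h.isNilpotent_eichler_sub_one hy) ?_ hw
  rw [← map_pow, ← map_mul, ← map_mul, h.pairTorus_mul_eichler two_ne_zero hey hfy,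
    eichler_pow h.left hey, Nat.cast_ofNat]

lemma sub_eichler_left_apply_mem (h : IsHyperbolicPairIn X e f)
    (hy : y ∈ perp (insert e (insert f X))) (hw : ρ (eichler e y) w ∈ torusWeightSpace ρ e f n) :
    w - ρ (eichler e y) w ∈ ⨆ k > n, torusWeightSpace ρ e f k := by
  have hback := h.eichler_apply_sub_self_mem (neg_mem hy) hw
  rwa [eichler_neg h.left (mem_perp_insert_insert.1 hy).1, ρ.inv_self_apply] at hback

lemma sub_eichler_right_apply_mem (h : IsHyperbolicPairIn X e f)
    (hy : y ∈ perp (insert e (insert f X))) (hw : ρ (eichler f y) w ∈ torusWeightSpace ρ e f n) :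
    w - ρ (eichler f y) w ∈ ⨆ k < n, torusWeightSpace ρ e f k := by
  rw [Set.insert_comm] at hy
  have hw' : ρ (eichler f y) w ∈ torusWeightSpace ρ f e (-n) := by
    rwa [torusWeightSpace_swap h.toIsHyperbolicPair, neg_neg]
  refine SetLike.le_def.1 (iSup₂_le fun k hk => ?_) (h.symm.sub_eichler_left_apply_mem hy hw')
  rw [torusWeightSpace_swap h.toIsHyperbolicPair]
  exact le_iSup₂_of_le (-k) (neg_lt.1 hk) le_rfl

lemma apply_sub_pow_smul_mem (h : IsHyperbolicPairIn X e f) (hv : IsLineEigenvector ρ X e p v)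
    (hg : g ∈ fixator X) (hF : splitForm m f (stdRep _ g e) ≠ 0) :
    ρ g v - splitForm m f (stdRep _ g e) ^ p • v ∈ ⨆ k < (p : ℤ), torusWeightSpace ρ e f k := by
  obtain ⟨y, hy, hyg⟩ := h.exists_eichler_right_eq_smul (stdRep_mem_perp hg h.left_mem)
    (by rw [splitForm_stdRep, h.left]) hF
  rw [← Module.End.mul_apply, ← map_mul] at hyg
  have hy' : y ∈ perp (insert f (insert e X)) := by rwa [Set.insert_comm]
  have hvg := hv _ (mul_mem (h.symm.eichler_mem_fixator hy') hg) _ hyg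
  rw [map_mul, Module.End.mul_apply] at hvg
  rw [← hvg]
  refine h.sub_eichler_right_apply_mem hy ?_
  rw [hvg]
  exact Submodule.smul_mem _ _ (h.mem_torusWeightSpace_of_isLineEigenvector hv)

/-- For generic `g` the difference `ρ g v - v` has only negative weights, and by the symmetric
argument only nonnegative ones. -/
lemma apply_eq_self_of_splitForm_ne_zero (h : IsHyperbolicPairIn X e f)
    (hv : IsLineEigenvector ρ X e 0 v) (hg : g ∈ fixator X)
    (hE : splitForm m e (stdRep _ g e) ≠ 0) (hF : splitForm m f (stdRep _ g e) ≠ 0) :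
    ρ g v = v := by
  have hneg := h.apply_sub_pow_smul_mem hv hg hF
  rw [pow_zero, one_smul, Nat.cast_zero] at hneg
  have hzero (w) (hw : w ∈ torusWeightSpace ρ e f 0) :
      w ∈ ⨆ k ≥ (0 : ℤ), torusWeightSpace ρ e f k :=
    Submodule.mem_iSup_of_mem 0 (Submodule.mem_iSup_of_mem le_rfl hw)
  obtain ⟨y, hy, hyg⟩ := h.symm.exists_eichler_right_eq_smul (stdRep_mem_perp hg h.left_mem)
    (by rw [splitForm_stdRep, h.left]) hE
  rw [Set.insert_comm] at hy
  rw [← Module.End.mul_apply, ← map_mul] at hyg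
  have hyv := h.apply_mem_torusWeightSpace_neg hv (mul_mem (h.eichler_mem_fixator hy) hg) hyg
  rw [map_mul, Module.End.mul_apply, Nat.cast_zero, neg_zero] at hyv
  have hnonneg : ρ g v - v ∈ ⨆ k ≥ (0 : ℤ), torusWeightSpace ρ e f k := by
    have hpos : ⨆ k > (0 : ℤ), torusWeightSpace ρ e f k ≤ ⨆ k ≥ (0 : ℤ), torusWeightSpace ρ e f k :=
      biSup_mono fun _ => le_of_lt
    rw [← sub_add_cancel (ρ g v) (ρ (eichler e y) (ρ g v))]
    exact sub_mem (add_mem (hpos (h.sub_eichler_left_apply_mem hy hyv)) (hzero _ hyv))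
      (hzero _ (h.mem_torusWeightSpace_of_isLineEigenvector hv))
  have hdisj := iSupIndep_torusWeightSpace (ρ := ρ) (e := e) (f := f) |>.disjoint_biSup_biSup
    (s := {k | k < 0}) (t := {k | k ≥ 0}) (Set.disjoint_left.2 fun _ => not_le_of_gt)
  exact sub_eq_zero.1 (Submodule.disjoint_def.1 hdisj _ hneg hnonneg)

lemma apply_eichler_right_eq_self (h : IsHyperbolicPairIn X e f)
    (hv : IsLineEigenvector ρ X e 0 v) (ha : a ∈ perp (insert e (insert f X)))
    (haa : splitForm m a a ≠ 0) : ρ (eichler f a) v = v := by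
  obtain ⟨hea, -⟩ := mem_perp_insert_insert.1 ha
  rw [Set.insert_comm] at ha
  refine h.apply_eq_self_of_splitForm_ne_zero hv (h.symm.eichler_mem_fixator ha) ?_ ?_
  · rw [h.symm.splitForm_right_stdRep_eichler ha, h.left, splitForm_comm a, hea, h.symm.pair]
    simpa using haa
  · rw [h.symm.splitForm_left_stdRep_eichler ha, h.symm.pair]
    exact one_ne_zero

lemma apply_eq_self_of_splitForm_right_ne_zero (h : IsHyperbolicPairIn X e f)
    (hv : IsLineEigenvector ρ X e 0 v) (ha : a ∈ perp (insert e (insert f X)))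
    (haa : splitForm m a a ≠ 0) (hg : g ∈ fixator X) (hF : splitForm m f (stdRep _ g e) ≠ 0) :
    ρ g v = v := by
  by_cases hE : splitForm m e (stdRep _ g e) = 0
  swap
  · exact h.apply_eq_self_of_splitForm_ne_zero hv hg hE hF
  obtain ⟨b, hb, hbb, hbg⟩ : ∃ b ∈ perp (insert e (insert f X)), splitForm m b b ≠ 0 ∧
      splitForm m e (stdRep _ (eichler f b * g) e) ≠ 0 := by
    by_contra! H
    have ha₁ := H a ha haa
    have ha₂ := H (-a) (neg_mem ha) (by simpa using haa)
    rw [Set.insert_comm] at ha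
    rw [map_mul, Module.End.mul_apply, h.symm.splitForm_right_stdRep_eichler ha] at ha₁
    rw [map_mul, Module.End.mul_apply, h.symm.splitForm_right_stdRep_eichler (neg_mem ha)] at ha₂
    simp only [map_neg, LinearMap.neg_apply, neg_neg] at ha₂
    refine mul_ne_zero hF haa ?_
    linear_combination 2 * hE - ha₁ - ha₂
  have hb' : b ∈ perp (insert f (insert e X)) := by rwa [Set.insert_comm]
  refine apply_eq_self_of_mul (h.apply_eichler_right_eq_self hv hb hbb) <|
    h.apply_eq_self_of_splitForm_ne_zero hv (mul_mem (h.symm.eichler_mem_fixator hb') hg) hbg (by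
      rwa [map_mul, Module.End.mul_apply, h.symm.splitForm_left_stdRep_eichler hb'])

lemma apply_eq_self_of_mem_fixator (h : IsHyperbolicPairIn X e f)
    (hv : IsLineEigenvector ρ X e 0 v) (ha : a ∈ perp (insert e (insert f X)))
    (haa : splitForm m a a ≠ 0) (hg : g ∈ fixator X) : ρ g v = v := by
  have hge : splitForm m (stdRep _ g f) (stdRep _ g e) ≠ 0 := by
    rw [splitForm_stdRep, h.symm.pair]
    exact one_ne_zero
  obtain ⟨y, hy, hF⟩ :=
    h.exists_eichler_left_ne_zero ha haa (stdRep_mem_perp hg h.right_mem) hge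
  have hyX := h.eichler_mem_fixator hy
  rw [← Module.End.mul_apply, ← map_mul] at hF
  have hyv : ρ (eichler e y) v = v := by
    simpa using hv _ hyX 1 (by rw [h.stdRep_eichler_left hy, one_smul])
  exact apply_eq_self_of_mul hyv <|
    h.apply_eq_self_of_splitForm_right_ne_zero hv ha haa (mul_mem hyX hg) hF

end IsHyperbolicPairIn

end Weights

section StandardFlag

variable {m : ℕ} {j : Fin m}

/-- The first `j` and the last `j` vectors of the standard basis of `ℂ^m`. They span the hyperbolic
part of the form that is split off after `j` steps along the standard isotropic flag. -/
def outerBasis (m j : ℕ) : Set (Fin m → ℂ) :=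
  (Pi.single · 1) '' {i : Fin m | (i : ℕ) < j ∨ (i.rev : ℕ) < j}

lemma outerBasis_zero : outerBasis m 0 = ∅ := by
  simp [outerBasis]

lemma outerBasis_succ (j : Fin m) : outerBasis m (j + 1) =
    insert (Pi.single j 1) (insert (Pi.single j.rev 1) (outerBasis m j)) := by
  have hindex : {i : Fin m | (i : ℕ) < j + 1 ∨ (i.rev : ℕ) < j + 1} =
      insert j (insert j.rev {i : Fin m | (i : ℕ) < j ∨ (i.rev : ℕ) < j}) := by
    ext i
    simp only [Set.mem_ofPred_eq, Set.mem_insert_iff, Fin.ext_iff, Fin.val_rev]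
    omega
  rw [outerBasis, hindex, Set.image_insert_eq, Set.image_insert_eq, outerBasis]

lemma mem_perp_outerBasis {k : ℕ} {y : Fin m → ℂ} :
    y ∈ perp (outerBasis m k) ↔ ∀ i : Fin m, ((i : ℕ) < k ∨ (i.rev : ℕ) < k) → y i = 0 := by
  simp only [mem_perp, outerBasis, Set.forall_mem_image, Set.mem_ofPred_eq, splitForm_single_left]
  refine Fin.rev_surjective.forall.trans (forall_congr' fun i => ?_)
  rw [Fin.rev_rev, or_comm]

lemma single_mem_perp_outerBasis {k : ℕ} {i : Fin m} (hi : k ≤ i) (hi' : k ≤ i.rev) :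
    Pi.single i (1 : ℂ) ∈ perp (outerBasis m k) := by
  refine mem_perp_outerBasis.2 fun i' hi'k => Pi.single_eq_of_ne ?_ _
  rintro rfl
  omega

lemma isHyperbolicPairIn_single (hj : j < j.rev) :
    IsHyperbolicPairIn (outerBasis m j) (Pi.single j 1) (Pi.single j.rev 1) where
  left := by rw [splitForm_single_left, Pi.single_eq_of_ne hj.ne']
  right := by rw [splitForm_single_right, Fin.rev_rev, Pi.single_eq_of_ne hj.ne]
  pair := by rw [splitForm_single_left, Pi.single_eq_same]
  left_mem := single_mem_perp_outerBasis le_rfl hj.le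
  right_mem := single_mem_perp_outerBasis hj.le (by rw [Fin.rev_rev])

lemma gIsUniUpper_eichler_single (hj : j < j.rev) {y : Fin m → ℂ}
    (hy : y ∈ perp (outerBasis m (j + 1))) : GIsUniUpper (eichler (Pi.single j 1) y) := by
  rw [mem_perp_outerBasis] at hy
  have hyj : y j.rev = 0 := hy _ (.inr (by rw [Fin.rev_rev]; exact Nat.lt_succ_self _))
  suffices hentry : ∀ p q : Fin m, q ≤ p →
      ((eichler (Pi.single j 1) y : GL (Fin m) ℂ) : Matrix (Fin m) (Fin m) ℂ) p q =
        (Pi.single q 1 : Fin m → ℂ) p from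
    ⟨fun i => by rw [hentry i i le_rfl, Pi.single_eq_same],
      fun p q hqp => by rw [hentry p q hqp.le, Pi.single_eq_of_ne hqp.ne']⟩
  intro p q hqp
  have hcol : (Pi.single q 1 : Fin m → ℂ) j.rev * y p = 0 := by
    rcases eq_or_ne j.rev q with rfl | hq
    · rw [hy p (.inr (Nat.lt_succ_of_le (Fin.rev_le_iff.1 hqp))), mul_zero]
    · rw [Pi.single_eq_of_ne hq, zero_mul]
  have hrow : y q.rev * (Pi.single j 1 : Fin m → ℂ) p = 0 := by
    rcases eq_or_ne p j with rfl | hp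
    · rw [hy q.rev (.inr (by rw [Fin.rev_rev]; exact Nat.lt_succ_of_le hqp)), zero_mul]
    · rw [Pi.single_eq_of_ne hp, mul_zero]
  have hcorner : (Pi.single q 1 : Fin m → ℂ) j.rev * (Pi.single j 1 : Fin m → ℂ) p = 0 := by
    rcases eq_or_ne j.rev q with rfl | hq
    · rw [Pi.single_eq_of_ne (hj.trans_le hqp).ne', mul_zero]
    · rw [Pi.single_eq_of_ne hq, zero_mul]
  rw [coe_apply_eq_stdRep, stdRep_eichler (isHyperbolicPairIn_single hj).left
    (by rw [splitForm_single_left, hyj]), eichlerMap_apply, splitForm_single_left,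
    splitForm_single_right]
  simp only [Pi.sub_apply, Pi.add_apply, Pi.smul_apply, smul_eq_mul]
  linear_combination hcol - hrow - splitForm m y y / 2 * hcorner

lemma coe_pairTorus_single (hj : j < j.rev) {c : ℂ} (hc : c ≠ 0) :
    ((pairTorus (Pi.single j 1) (Pi.single j.rev 1) c : GL (Fin m) ℂ) : Matrix (Fin m) (Fin m) ℂ) =
      Matrix.diagonal (Function.update (Function.update 1 j.rev c⁻¹) j c) := by
  ext p q
  rw [coe_apply_eq_stdRep, (isHyperbolicPairIn_single hj).stdRep_pairTorus hc, pairTorusMap_apply,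
    splitForm_single_left, splitForm_single_left, Fin.rev_rev]
  simp only [Pi.add_apply, Pi.smul_apply, Pi.single_apply, smul_eq_mul, Matrix.diagonal_apply,
    Function.update_apply, Pi.one_apply]
  split_ifs <;> simp_all [hj.ne]

end StandardFlag

section HighestWeight

variable {l : ℕ} {U : Type*} [AddCommGroup U] [Module ℂ U]
  {ρ : Representation ℂ (specialOrthGroup (2 * l + 1)) U} {a : Fin l → ℤ} {v : U}
  {g : specialOrthGroup (2 * l + 1)} {j : Fin (2 * l + 1)}

lemma lt_rev_of_lt (hj : (j : ℕ) < l) : j < j.rev := by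
  rw [Fin.lt_def, Fin.val_rev]
  omega

lemma exists_anisotropic_mem_perp_outerBasis {k : ℕ} (hk : k ≤ l) :
    ∃ x ∈ perp (outerBasis (2 * l + 1) k), splitForm (2 * l + 1) x x ≠ 0 := by
  let mid : Fin (2 * l + 1) := ⟨l, by omega⟩
  have hmid : mid.rev = mid := Fin.ext (by simp only [mid, Fin.val_rev]; omega)
  refine ⟨Pi.single mid 1, single_mem_perp_outerBasis hk (by rwa [hmid]), ?_⟩
  rw [splitForm_single_left, hmid, Pi.single_eq_same]
  exact one_ne_zero

/-- An element fixing all basis vectors but the middle one also fixes that one up to scale. -/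
lemma apply_eq_self_of_mem_fixator_outerBasis_self (hv : BIsHWVector ρ a v)
    (hg : g ∈ fixator (outerBasis (2 * l + 1) l)) : ρ g v = v := by
  have hgj {j : Fin (2 * l + 1)} (hj : (j : ℕ) ≠ l) :
      stdRep _ g (Pi.single j 1) = Pi.single j 1 :=
    hg _ ⟨j, by rw [Set.mem_ofPred_eq, Fin.val_rev]; omega, rfl⟩
  have hdiag : GIsDiag g := by
    intro i j hij
    rw [coe_apply_eq_stdRep]
    by_cases hj : (j : ℕ) = l
    · have hi : (i.rev : ℕ) ≠ l := by
        rw [Fin.val_rev]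
        omega
      have hpair := splitForm_stdRep g (Pi.single i.rev 1) (Pi.single j 1)
      rwa [hgj hi, splitForm_single_left, splitForm_single_left, Fin.rev_rev,
        Pi.single_eq_of_ne hij] at hpair
    · rw [hgj hj, Pi.single_eq_of_ne hij]
  rw [hv.2.2 g hdiag, Finset.prod_eq_one, one_smul]
  intro i _
  rw [coe_apply_eq_stdRep, hgj i.2.ne, Pi.single_eq_same, _root_.one_zpow]

lemma apply_pairTorus_single (hv : BIsHWVector ρ a v) (hj : (j : ℕ) < l) {c : ℂ} (hc : c ≠ 0) :
    ρ (pairTorus (Pi.single j 1) (Pi.single j.rev 1) c) v = c ^ a ⟨j, hj⟩ • v := by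
  have hcoe := coe_pairTorus_single (lt_rev_of_lt hj) hc
  rw [hv.2.2 _ fun p q hpq => by rw [hcoe, Matrix.diagonal_apply_ne _ hpq],
    Finset.prod_eq_single ⟨j, hj⟩, hcoe, Matrix.diagonal_apply_eq]
  · exact congrArg (· ^ _ • v) (Function.update_self _ _ _)
  · intro i _ hi
    rw [hcoe, Matrix.diagonal_apply_eq, Function.update_of_ne, Function.update_of_ne,
      Pi.one_apply, _root_.one_zpow]
    · rw [Ne, Fin.ext_iff, Fin.val_rev, Fin.val_castLE]
      omega
    · rintro rfl
      exact hi rfl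
  · simp

lemma isLineEigenvector_single {p : ℕ} (hv : BIsHWVector ρ a v) (hj : (j : ℕ) < l)
    (haj : a ⟨j, hj⟩ = p) (hfix : ∀ k ∈ fixator (outerBasis (2 * l + 1) (j + 1)), ρ k v = v) :
    IsLineEigenvector ρ (outerBasis (2 * l + 1) j) (Pi.single j 1) p v := by
  rw [outerBasis_succ] at hfix
  refine (isHyperbolicPairIn_single (lt_rev_of_lt hj)).isLineEigenvector hfix (fun c hc => ?_)
    fun y hy => hv.2.1 _ (gIsUniUpper_eichler_single (lt_rev_of_lt hj) ?_)
  · rw [apply_pairTorus_single hv hj hc, haj, zpow_natCast]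
  · rwa [outerBasis_succ]

variable [FiniteDimensional ℂ U]

lemma apply_eq_self_of_mem_fixator_outerBasis (hv : BIsHWVector ρ a v) {k : ℕ} (hk : k ≤ l)
    (ha : ∀ i : Fin l, k ≤ i → a i = 0) (hg : g ∈ fixator (outerBasis (2 * l + 1) k)) :
    ρ g v = v := by
  induction hk using Nat.decreasingInduction generalizing g with
  | self => exact apply_eq_self_of_mem_fixator_outerBasis_self hv hg
  | of_succ k hk ih =>
    let j : Fin (2 * l + 1) := ⟨k, by omega⟩
    obtain ⟨x, hx, hxx⟩ := exists_anisotropic_mem_perp_outerBasis (k := j + 1) hk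
    rw [outerBasis_succ] at hx
    exact (isHyperbolicPairIn_single (lt_rev_of_lt hk)).apply_eq_self_of_mem_fixator
      (isLineEigenvector_single hv (j := j) hk (by rw [ha _ le_rfl, Nat.cast_zero])
        fun g hg => ih (fun i hi => ha i (Nat.le_of_succ_le hi)) hg) hx hxx hg

lemma isLineEigenvector_of_bIsHWVector_smul_single {p : ℕ} (hl : 0 < l)
    (hv : BIsHWVector ρ (fun i => if (i : ℕ) = 0 then p else 0) v) :
    IsLineEigenvector ρ ∅ (Pi.single 0 1) p v := by
  rw [← outerBasis_zero]
  refine isLineEigenvector_single (j := 0) hv hl (if_pos rfl) fun k hk =>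
    apply_eq_self_of_mem_fixator_outerBasis hv hl (fun i hi => if_neg (by omega)) hk

end HighestWeight

section MatrixCoefficients

variable {m : ℕ} {U : Type*} [AddCommGroup U] [Module ℂ U]
  {ρ : Representation ℂ (specialOrthGroup m) U} {e f w x a : Fin m → ℂ} {v : U}
  {g : specialOrthGroup m} {p : ℕ}

lemma mem_fixator_empty (g : specialOrthGroup m) : g ∈ fixator ∅ :=
  fun _ hx => hx.elim

lemma mem_perp_empty (x : Fin m → ℂ) : x ∈ perp ∅ :=
  mem_perp.2 fun _ hx => hx.elim

namespace IsHyperbolicPairIn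

lemma exists_mem_perp_splitForm_eq (h : IsHyperbolicPairIn ∅ e f)
    (hw : w ∈ perp (insert e (insert f ∅))) (hw0 : w ≠ 0) (c : ℂ) :
    ∃ y ∈ perp (insert e (insert f ∅)), splitForm m y w = c := by
  obtain ⟨hew, hfw, -⟩ := mem_perp_insert_insert.1 hw
  obtain ⟨z, hz⟩ := exists_splitForm_ne_zero hw0
  obtain ⟨y, hy, hyz⟩ := h.exists_add_add_eq_of_mem_perp (mem_perp_empty z)
  have hyw : splitForm m y w = splitForm m z w := by
    rw [← hyz]
    simp [hew, hfw]
  refine ⟨(c / splitForm m z w) • y, Submodule.smul_mem _ _ hy, ?_⟩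
  rw [map_smul, LinearMap.smul_apply, hyw, smul_eq_mul, div_mul_cancel₀ _ hz]

lemma exists_stdRep_left_eq (h : IsHyperbolicPairIn ∅ e f)
    (ha : a ∈ perp (insert e (insert f ∅))) (haa : splitForm m a a ≠ 0) (hx : x ≠ 0)
    (hxx : splitForm m x x = 0) : ∃ g : specialOrthGroup m, stdRep _ g e = x := by
  obtain ⟨z, hz⟩ := exists_splitForm_ne_zero hx
  obtain ⟨y, -, hF⟩ := h.exists_eichler_left_ne_zero ha haa (mem_perp_empty z) hz
  obtain ⟨y', -, hy'⟩ := h.exists_eichler_right_eq_smul (mem_perp_empty _)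
    (by rw [splitForm_stdRep, hxx]) hF
  refine ⟨(eichler f y' * eichler e y)⁻¹ * pairTorus e f (splitForm m f (stdRep _ (eichler e y) x)),
    ?_⟩
  simp only [_root_.mul_inv_rev, map_mul, Module.End.mul_apply, h.stdRep_pairTorus_left hF, ← hy',
    Representation.inv_self_apply]

variable [FiniteDimensional ℂ U]

/-- An Eichler transformation along `f` takes `g e` either to a multiple of `f` or into the
orthogonal complement of `e` and `f`. -/
lemma apply_mem_iSup_nonpos (h : IsHyperbolicPairIn ∅ e f) (hv : IsLineEigenvector ρ ∅ e p v)
    (hF : splitForm m f (stdRep _ g e) = 0) : ρ g v ∈ ⨆ k ≤ (0 : ℤ), torusWeightSpace ρ e f k := by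
  have hmem {n : ℤ} (hn : n ≤ 0) {u : U} (hu : u ∈ torusWeightSpace ρ e f n) :
      u ∈ ⨆ k ≤ (0 : ℤ), torusWeightSpace ρ e f k :=
    Submodule.mem_iSup_of_mem n (Submodule.mem_iSup_of_mem hn hu)
  obtain ⟨w, hw, hwg⟩ := h.exists_add_add_eq_of_mem_perp (mem_perp_empty (stdRep _ g e))
  rw [hF, zero_smul, zero_add] at hwg
  rcases eq_or_ne w 0 with rfl | hw0
  · rw [add_zero] at hwg
    exact hmem (neg_nonpos.2 p.cast_nonneg)
      (h.apply_mem_torusWeightSpace_neg hv (mem_fixator_empty g) hwg.symm)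
  obtain ⟨y, hy, hyw⟩ := h.exists_mem_perp_splitForm_eq hw hw0 (splitForm m e (stdRep _ g e))
  obtain ⟨-, hfy, -⟩ := mem_perp_insert_insert.1 hy
  have hyg : stdRep _ (eichler f y) (stdRep _ g e) = w := by
    have hyx : splitForm m y (stdRep _ g e) = splitForm m e (stdRep _ g e) := by
      rw [← hwg, map_add, map_smul, splitForm_comm y, hfy, hyw, hwg, smul_zero, zero_add]
    rw [stdRep_eichler h.right hfy, eichlerMap_apply, hF, hyx]
    nth_rw 1 [← hwg]
    module
  rw [← Module.End.mul_apply, ← map_mul] at hyg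
  have hzero := h.apply_mem_torusWeightSpace_zero hv (mem_fixator_empty _) (by rwa [hyg])
  rw [map_mul, Module.End.mul_apply] at hzero
  rw [← sub_add_cancel (ρ g v) (ρ (eichler f y) (ρ g v))]
  have hneg : ⨆ k < (0 : ℤ), torusWeightSpace ρ e f k ≤ ⨆ k ≤ (0 : ℤ), torusWeightSpace ρ e f k :=
    biSup_mono fun _ => le_of_lt
  exact add_mem (hneg (h.sub_eichler_right_apply_mem hy hzero)) (hmem le_rfl hzero)

/-- The functional extracts the `v`-component of the weight `p` part. -/
lemma exists_dual_apply_eq_pow (h : IsHyperbolicPairIn ∅ e f) (hp : p ≠ 0) (hv0 : v ≠ 0)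
    (hv : IsLineEigenvector ρ ∅ e p v) :
    ∃ φ : Module.Dual ℂ U, ∀ g, φ (ρ g v) = splitForm m f (stdRep _ g e) ^ p := by
  set K := ⨆ k ≠ (p : ℤ), torusWeightSpace ρ e f k
  have hvK : v ∉ K := fun hvK => hv0 <| Submodule.disjoint_def.1 (iSupIndep_torusWeightSpace p) v
    (h.mem_torusWeightSpace_of_isLineEigenvector hv) hvK
  obtain ⟨φ, hφK, hφv⟩ := LinearMap.exists_extend_of_notMem (0 : K →ₗ[ℂ] ℂ) hvK 1
  have hφ (S : Set ℤ) (hS : (p : ℤ) ∉ S) {u : U} (hu : u ∈ ⨆ k ∈ S, torusWeightSpace ρ e f k) :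
      φ u = 0 := by
    have hSK : ⨆ k ∈ S, torusWeightSpace ρ e f k ≤ K :=
      biSup_mono fun k hk => ne_of_mem_of_not_mem hk hS
    exact LinearMap.congr_fun hφK ⟨u, hSK hu⟩
  refine ⟨φ, fun g => ?_⟩
  by_cases hF : splitForm m f (stdRep _ g e) = 0
  · rw [hF, zero_pow hp, hφ {k | k ≤ 0} (by simpa using hp) (h.apply_mem_iSup_nonpos hv hF)]
  · have hsub := hφ {k | k < p} (by simp)
      (h.apply_sub_pow_smul_mem hv (mem_fixator_empty g) hF)
    rwa [map_sub, map_smul, hφv, smul_eq_mul, mul_one, sub_eq_zero] at hsub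

end IsHyperbolicPairIn

end MatrixCoefficients

section InvariantForms

variable {m : ℕ} {G : Subgroup (GL (Fin m) ℂ)} {V W : Type*} [AddCommGroup V] [Module ℂ V]
  [AddCommGroup W] [Module ℂ W] {ρ : Representation ℂ G V} {σ : Representation ℂ G W}

/-- The representation `ρ` is isomorphic to its dual, the isomorphism being encoded as an invariant
perfect pairing. -/
def IsSelfDual (ρ : Representation ℂ G V) : Prop :=
  ∃ E : V ≃ₗ[ℂ] Module.Dual ℂ V, ∀ g u u', E (ρ g u) (ρ g u') = E u u'

lemma IsSelfDual.repHasInvariant (hρ : IsSelfDual ρ) {τ : Module.Dual ℂ V} (hτ0 : τ ≠ 0)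
    (hτ : ∀ g u, τ (ρ g u) = τ u) : RepHasInvariant ρ := by
  obtain ⟨E, hE⟩ := hρ
  refine ⟨E.symm τ, E.symm.map_ne_zero_iff.2 hτ0, fun g => E.injective (LinearMap.ext fun u => ?_)⟩
  rw [← ρ.self_inv_apply g u, hE, LinearEquiv.apply_symm_apply]
  exact (hτ g _).symm

lemma IsSelfDual.tensorRep2 [FiniteDimensional ℂ V] [FiniteDimensional ℂ W] (hρ : IsSelfDual ρ)
    (hσ : IsSelfDual σ) : IsSelfDual (tensorRep2 ρ σ) := by
  obtain ⟨E, hE⟩ := hρ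
  obtain ⟨F, hF⟩ := hσ
  let EF := (TensorProduct.congr E F).trans (TensorProduct.dualDistribEquiv ℂ V W)
  refine ⟨EF, fun g u u' => ?_⟩
  suffices h : EF.toLinearMap.compl₁₂ (_root_.tensorRep2 ρ σ g) (_root_.tensorRep2 ρ σ g) =
      EF.toLinearMap from LinearMap.congr_fun₂ h u u'
  refine TensorProduct.ext' fun v w => TensorProduct.ext' fun v' w' => ?_
  change E (ρ g v) (ρ g v') * F (σ g w) (σ g w') = E v v' * F w w'
  rw [hE, hF]

namespace RepIsIrred

lemma isSelfDual [FiniteDimensional ℂ V] (hρ : RepIsIrred ρ) {B : LinearMap.BilinForm ℂ V}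
    (hB0 : B ≠ 0) (hB : ∀ g u u', B (ρ g u) (ρ g u') = B u u') : IsSelfDual ρ := by
  have hker : LinearMap.ker B = ⊥ := by
    refine (hρ.2 _ fun g u hu => ?_).resolve_right fun htop => hB0 (LinearMap.ker_eq_top.1 htop)
    rw [LinearMap.mem_ker] at hu ⊢
    ext u'
    rw [← ρ.self_inv_apply g u', hB, hu]
    rfl
  exact ⟨LinearMap.linearEquivOfInjective B (LinearMap.ker_eq_bot.1 hker)
    Subspace.dual_finrank_eq.symm, hB⟩

lemma span_orbit_eq_top (hρ : RepIsIrred ρ) {v : V} (hv : v ≠ 0) :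
    Submodule.span ℂ (Set.range (ρ · v)) = ⊤ := by
  have hmem : v ∈ Submodule.span ℂ (Set.range (ρ · v)) :=
    Submodule.subset_span ⟨1, by simp only [map_one, Module.End.one_apply]⟩
  refine (hρ.2 _ fun g x hx => ?_).resolve_left fun hbot => hv ?_
  · suffices hle : Submodule.span ℂ (Set.range (ρ · v)) ≤
        (Submodule.span ℂ (Set.range (ρ · v))).comap (ρ g) from hle hx
    refine Submodule.span_le.2 ?_
    rintro _ ⟨g', rfl⟩
    exact Submodule.subset_span ⟨g * g', by simp only [map_mul, Module.End.mul_apply]⟩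
  · rwa [hbot, Submodule.mem_bot] at hmem

/-- The traces of `Ψ u * Ψ u'` and `Ψ u * Ψ u' * Ψ u''` are invariant: the first makes `ρ`
self-dual and the second is then dual to an invariant vector. -/
lemma repHasInvariant_cube [FiniteDimensional ℂ V] (hρ : RepIsIrred ρ)
    {Ψ : V →ₗ[ℂ] Module.End ℂ W} (hΨ : ∀ g u, Ψ (ρ g u) = σ g * Ψ u * σ g⁻¹)
    (h₂ : ∃ u u', LinearMap.trace ℂ W (Ψ u * Ψ u') ≠ 0)
    (h₃ : ∃ u u' u'', LinearMap.trace ℂ W (Ψ u * (Ψ u' * Ψ u'')) ≠ 0) :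
    RepHasInvariant (tensorRep2 ρ (tensorRep2 ρ ρ)) := by
  have hinv (g : G) : σ g⁻¹ * σ g = 1 := by rw [← map_mul, inv_mul_cancel, map_one]
  have hcancel (g : G) (T : Module.End ℂ W) : σ g⁻¹ * (σ g * T) = T := by
    rw [← mul_assoc, hinv, one_mul]
  have hmul (g : G) (S T : Module.End ℂ W) :
      σ g * S * σ g⁻¹ * (σ g * T * σ g⁻¹) = σ g * (S * T) * σ g⁻¹ := by
    simp only [mul_assoc, hcancel]
  have htrace (g : G) (T : Module.End ℂ W) :
      LinearMap.trace ℂ W (σ g * T * σ g⁻¹) = LinearMap.trace ℂ W T := by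
    rw [LinearMap.trace_mul_comm, ← mul_assoc, hinv, one_mul]
  let β : LinearMap.BilinForm ℂ V :=
    ((LinearMap.mul ℂ (Module.End ℂ W)).compl₁₂ Ψ Ψ).compr₂ (LinearMap.trace ℂ W)
  have hself : IsSelfDual ρ := by
    obtain ⟨u, u', hu⟩ := h₂
    refine hρ.isSelfDual (B := β) (fun hβ => hu (LinearMap.congr_fun₂ hβ u u')) fun g u u' => ?_
    change LinearMap.trace ℂ W (Ψ (ρ g u) * Ψ (ρ g u')) = LinearMap.trace ℂ W (Ψ u * Ψ u')
    rw [hΨ, hΨ, hmul, htrace]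
  let τ : Module.Dual ℂ (V ⊗[ℂ] (V ⊗[ℂ] V)) := LinearMap.trace ℂ W ∘ₗ LinearMap.mul' ℂ _ ∘ₗ
    TensorProduct.map Ψ (LinearMap.mul' ℂ _ ∘ₗ TensorProduct.map Ψ Ψ)
  refine (hself.tensorRep2 (hself.tensorRep2 hself)).repHasInvariant (τ := τ) ?_ fun g => ?_
  · obtain ⟨u, u', u'', hu⟩ := h₃
    exact fun hτ => hu (LinearMap.congr_fun hτ (u ⊗ₜ (u' ⊗ₜ u'')))
  · suffices h : τ ∘ₗ tensorRep2 ρ (tensorRep2 ρ ρ) g = τ from LinearMap.congr_fun h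
    refine TensorProduct.ext <| LinearMap.ext fun u => TensorProduct.ext' fun u' u'' => ?_
    change LinearMap.trace ℂ W (Ψ (ρ g u) * (Ψ (ρ g u') * Ψ (ρ g u''))) =
      LinearMap.trace ℂ W (Ψ u * (Ψ u' * Ψ u''))
    rw [hΨ, hΨ, hΨ, hmul, hmul, htrace]

end RepIsIrred

end InvariantForms

section QuadraticOrbit

variable {m : ℕ} {U : Type*} [AddCommGroup U] [Module ℂ U] [FiniteDimensional ℂ U]
  {ρ : Representation ℂ (specialOrthGroup m) U} {e f a : Fin m → ℂ} {v : U}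

namespace IsHyperbolicPairIn

lemma linearCombination_rankOne_eq_zero (h : IsHyperbolicPairIn ∅ e f)
    (ha : a ∈ perp (insert e (insert f ∅))) (haa : splitForm m a a ≠ 0) (hv0 : v ≠ 0)
    (hv : IsLineEigenvector ρ ∅ e 2 v) {t : specialOrthGroup m →₀ ℂ}
    (ht : Finsupp.linearCombination ℂ (ρ · v) t = 0) :
    Finsupp.linearCombination ℂ (fun g => rankOne (splitForm m) (stdRep _ g e)) t = 0 := by
  obtain ⟨φ, hφ⟩ := h.exists_dual_apply_eq_pow two_ne_zero hv0 hv
  have hform (x y) : splitForm m x (Finsupp.linearCombination ℂ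
      (fun g => rankOne (splitForm m) (stdRep _ g e)) t y) =
        t.sum fun g c => c * (splitForm m (stdRep _ g e) x * splitForm m (stdRep _ g e) y) := by
    simp only [Finsupp.linearCombination_apply, Finsupp.sum, LinearMap.sum_apply,
      LinearMap.smul_apply, rankOne_apply, map_sum, map_smul, smul_eq_mul]
    refine Finset.sum_congr rfl fun g _ => ?_
    rw [splitForm_comm x]
    ring
  refine h.eq_zero_of_trace_eq_zero_of_isotropic isSymm_splitForm nondegenerate_splitForm
    (fun x y => ?_) (fun x hxx => ?_) ?_
  · rw [hform, hform]
    simp only [mul_comm]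
  · rcases eq_or_ne x 0 with rfl | hx
    · rw [map_zero, LinearMap.zero_apply]
    rw [Set.insert_comm] at ha
    obtain ⟨k, rfl⟩ := h.symm.exists_stdRep_left_eq ha haa hx hxx
    have hk := congrArg (fun u => φ (ρ k⁻¹ u)) ht
    simp only [Finsupp.linearCombination_apply, Finsupp.sum, map_sum, map_smul, map_zero,
      ← Module.End.mul_apply, ← map_mul, hφ, smul_eq_mul] at hk
    rw [hform, ← hk]
    refine Finset.sum_congr rfl fun g _ => ?_
    rw [map_mul, Module.End.mul_apply, splitForm_comm f, splitForm_stdRep_left, inv_inv, sq]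
  · simp only [Finsupp.linearCombination_apply, Finsupp.sum, map_sum, map_smul, trace_rankOne,
      splitForm_stdRep, h.left, smul_zero, Finset.sum_const_zero]

lemma exists_equivariant_rankOne (h : IsHyperbolicPairIn ∅ e f)
    (ha : a ∈ perp (insert e (insert f ∅))) (haa : splitForm m a a ≠ 0) (hρ : RepIsIrred ρ)
    (hv0 : v ≠ 0) (hv : IsLineEigenvector ρ ∅ e 2 v) :
    ∃ Ψ : U →ₗ[ℂ] Module.End ℂ (Fin m → ℂ),
      (∀ g, Ψ (ρ g v) = rankOne (splitForm m) (stdRep _ g e)) ∧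
        ∀ g u, Ψ (ρ g u) = stdRep _ g * Ψ u * stdRep _ g⁻¹ := by
  have hspan := hρ.span_orbit_eq_top hv0
  obtain ⟨Ψ, hΨ⟩ := exists_linearMap_apply_eq hspan fun t ht =>
    h.linearCombination_rankOne_eq_zero ha haa hv0 hv ht
  refine ⟨Ψ, hΨ, fun g => ?_⟩
  suffices hext : Ψ ∘ₗ ρ g = LinearMap.mulLeftRight ℂ (stdRep _ g, stdRep _ g⁻¹) ∘ₗ Ψ from
    LinearMap.congr_fun hext
  refine LinearMap.ext_on_range hspan fun k => ?_
  rw [LinearMap.comp_apply, LinearMap.comp_apply, LinearMap.mulLeftRight_apply,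
    ← Module.End.mul_apply, ← map_mul, hΨ, hΨ, map_mul, Module.End.mul_apply,
    conj_rankOne_of_isometry _ (splitForm_stdRep g)]
  rw [← map_mul, mul_inv_cancel, map_one]

lemma repHasInvariant_cube (h : IsHyperbolicPairIn ∅ e f)
    (ha : a ∈ perp (insert e (insert f ∅))) (haa : splitForm m a a ≠ 0) (hρ : RepIsIrred ρ)
    (hv0 : v ≠ 0) (hv : IsLineEigenvector ρ ∅ e 2 v) :
    RepHasInvariant (tensorRep2 ρ (tensorRep2 ρ ρ)) := by
  obtain ⟨Ψ, hΨv, hΨ⟩ := h.exists_equivariant_rankOne ha haa hρ hv0 hv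
  obtain ⟨k, hk⟩ := h.exists_stdRep_left_eq ha haa h.symm.left_ne_zero h.right
  have hef : splitForm m e f = 1 := h.pair
  have hfe : splitForm m f e = 1 := h.symm.pair
  have hΨe : Ψ v = rankOne (splitForm m) e := by simpa using hΨv 1
  refine hρ.repHasInvariant_cube hΨ ⟨v, ρ k v, ?_⟩ ⟨v, ρ k v, ρ (eichler f a) v, ?_⟩
  · rw [hΨv, hΨe, hk, trace_rankOne_mul, hef, hfe, one_mul]
    exact one_ne_zero
  · rw [Set.insert_comm] at ha
    have hae : splitForm m a e = 0 := by
      rw [splitForm_comm, (mem_perp_insert_insert.1 ha).2.1]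
    rw [hΨv, hΨv, hΨe, hk, trace_rankOne_mul_mul, h.symm.splitForm_left_stdRep_eichler ha,
      hef, splitForm_comm (stdRep _ (eichler f a) e), h.symm.splitForm_right_stdRep_eichler ha,
      h.left, hae, hfe]
    simpa using haa

end IsHyperbolicPairIn

end QuadraticOrbit

section StandardCube

lemma exists_ne_prod_signs_eq_neg_one {ι : Type*} [Fintype ι] [DecidableEq ι]
    (hι : 3 < Fintype.card ι) (i j k : ι) : ∃ (p q : ι) (ε : ι → ℤˣ),
      p ≠ q ∧ (∀ r, ε r = if r = p ∨ r = q then -1 else 1) ∧ ε i * ε j * ε k = -1 := by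
  obtain ⟨q, -, hq⟩ : ∃ q ∈ Finset.univ, q ∉ ({i, j, k} : Finset ι) :=
    Finset.exists_mem_notMem_of_card_lt_card (Finset.card_le_three.trans_lt hι)
  simp only [Finset.mem_insert, Finset.mem_singleton, not_or] at hq
  obtain ⟨p, hpq, hp⟩ : ∃ p, p ≠ q ∧ (if i = p then (-1 : ℤˣ) else 1) *
      (if j = p then -1 else 1) * (if k = p then -1 else 1) = -1 := by
    by_cases hij : i = j
    · refine ⟨k, Ne.symm hq.2.2, ?_⟩
      by_cases hjk : j = k <;> simp [hij, hjk]
    by_cases hik : i = k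
    · exact ⟨j, Ne.symm hq.2.1, by simp [hij, ← hik]⟩
    · exact ⟨i, Ne.symm hq.1, by simp [Ne.symm hij, Ne.symm hik]⟩
  refine ⟨p, q, _, hpq, fun _ => rfl, ?_⟩
  simpa only [Ne.symm hq.1, Ne.symm hq.2.1, Ne.symm hq.2.2, or_false] using hp

variable {m : ℕ}

lemma repr_tensorRep2_cube {G : Subgroup (GL (Fin m) ℂ)} {V ι : Type*} [AddCommGroup V] [Module ℂ V]
    (b : Module.Basis ι ℂ V) {ρ : Representation ℂ G V} {g : G} {ε : ι → ℂ}
    (hε : ∀ i, ρ g (b i) = ε i • b i) (t : V ⊗[ℂ] (V ⊗[ℂ] V)) (i j k : ι) :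
    (b.tensorProduct (b.tensorProduct b)).repr (tensorRep2 ρ (tensorRep2 ρ ρ) g t) (i, j, k) =
      ε i * ε j * ε k * (b.tensorProduct (b.tensorProduct b)).repr t (i, j, k) := by
  classical
  set b₃ := b.tensorProduct (b.tensorProduct b)
  suffices h : b₃.coord (i, j, k) ∘ₗ tensorRep2 ρ (tensorRep2 ρ ρ) g =
      (ε i * ε j * ε k) • b₃.coord (i, j, k) from LinearMap.congr_fun h t
  refine b₃.ext fun ⟨i', j', k'⟩ => ?_
  have hb₃ : tensorRep2 ρ (tensorRep2 ρ ρ) g (b₃ (i', j', k')) =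
      (ε i' * ε j' * ε k') • b₃ (i', j', k') := by
    simp only [b₃, Module.Basis.tensorProduct_apply]
    change ρ g (b i') ⊗ₜ (ρ g (b j') ⊗ₜ ρ g (b k')) = _
    simp only [hε, ← TensorProduct.smul_tmul', TensorProduct.tmul_smul, smul_smul]
    congr 1
    ring
  rw [LinearMap.comp_apply, hb₃, map_smul, LinearMap.smul_apply, Module.Basis.coord_apply,
    Module.Basis.repr_self, Finsupp.single_apply]
  split_ifs with h
  · cases h
    rfl
  · simp only [smul_zero]

lemma exists_stdRep_eq_neg {u w : Fin m → ℂ} (hu : splitForm m u u ≠ 0) (hw : splitForm m w w ≠ 0)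
    (huw : splitForm m u w = 0) :
    ∃ g : specialOrthGroup m, stdRep _ g u = -u ∧ stdRep _ g w = -w ∧
      ∀ x, splitForm m u x = 0 → splitForm m w x = 0 → stdRep _ g x = x := by
  obtain ⟨s, t, h, hs, ht⟩ :=
    IsHyperbolicPair.exists_of_orthogonal_anisotropic isSymm_splitForm hu hw huw
  have hc : (-1 : ℂ) ≠ 0 := neg_ne_zero.2 one_ne_zero
  set g := pairTorus (u + s • w) (t • (u - s • w)) (-1)
  have hadd : stdRep _ g u + s • stdRep _ g w = -(u + s • w) := by
    rw [← map_smul, ← map_add, h.stdRep_pairTorus_left hc, neg_one_smul]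
  have hsub : stdRep _ g u - s • stdRep _ g w = -(u - s • w) := by
    refine smul_right_injective _ ht ?_
    simp only
    rw [← map_smul, ← map_sub, ← map_smul, h.stdRep_pairTorus_right hc, inv_neg_one, neg_one_smul,
      smul_neg]
  refine ⟨g, ?_, smul_right_injective _ hs ?_, fun x hux hwx => ?_⟩
  · linear_combination (norm := module) (2⁻¹ : ℂ) • hadd + (2⁻¹ : ℂ) • hsub
  · linear_combination (norm := module) (2⁻¹ : ℂ) • hadd - (2⁻¹ : ℂ) • hsub
  · refine h.stdRep_pairTorus_of_orthogonal hc ?_ ?_ <;> simp [hux, hwx]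

lemma exists_orthogonal_basis_splitForm (m : ℕ) :
    ∃ b : Module.Basis (Fin m) ℂ (Fin m → ℂ), (∀ i, splitForm m (b i) (b i) ≠ 0) ∧
      ∀ i j, i ≠ j → splitForm m (b i) (b j) = 0 := by
  obtain ⟨b, hb⟩ := LinearMap.BilinForm.exists_orthogonal_basis (B := splitForm m)
    ⟨splitForm_comm⟩
  have hne := LinearMap.BilinForm.iIsOrtho.not_isOrtho_basis_self_of_nondegenerate hb
    nondegenerate_splitForm
  refine ⟨b.reindex (finCongr (Module.finrank_fin_fun ℂ)), fun i => ?_, fun i j hij => ?_⟩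
  · rw [Module.Basis.reindex_apply]
    exact hne _
  · rw [Module.Basis.reindex_apply, Module.Basis.reindex_apply]
    exact hb ((Equiv.injective _).ne hij)

lemma not_repHasInvariant_stdRep_cube (hm : 3 < m) :
    ¬ RepHasInvariant (tensorRep2 (stdRep (specialOrthGroup m))
      (tensorRep2 (stdRep (specialOrthGroup m)) (stdRep (specialOrthGroup m)))) := by
  rintro ⟨t, ht0, ht⟩
  obtain ⟨b, hbb, hb⟩ := exists_orthogonal_basis_splitForm m
  refine ht0 ((b.tensorProduct (b.tensorProduct b)).ext_elem fun ⟨i, j, k⟩ => ?_)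
  obtain ⟨p, q, ε, hpq, hε, hprod⟩ := exists_ne_prod_signs_eq_neg_one
    (hm.trans_eq (Fintype.card_fin m).symm) i j k
  obtain ⟨g, hgp, hgq, hg⟩ := exists_stdRep_eq_neg (hbb p) (hbb q) (hb p q hpq)
  have hsign (r : Fin m) : stdRep _ g (b r) = ((ε r : ℤ) : ℂ) • b r := by
    rw [hε]
    split_ifs with hr
    · rcases hr with rfl | rfl <;> simpa
    · rw [not_or] at hr
      simpa using hg _ (hb _ _ (Ne.symm hr.1)) (hb _ _ (Ne.symm hr.2))
  have hneg := repr_tensorRep2_cube b hsign t i j k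
  rw [ht, ← Int.cast_mul, ← Int.cast_mul, ← Units.val_mul, ← Units.val_mul, hprod, Units.val_neg,
    Units.val_one, Int.cast_neg, Int.cast_one, neg_one_mul, self_eq_neg] at hneg
  rw [hneg, map_zero, Finsupp.zero_apply]

end StandardCube

theorem saturation_fails_SO_odd (l : ℕ) (hl : 2 ≤ l) :
    letI G := specialOrthGroup (2 * l + 1)
    letI std := stdRep G
    -- `3·ω₁` lies in the root lattice of `B_l` …
    ((3 : ℤ) • Pi.single (⟨0, by omega⟩ : Fin l) (1 : ℤ) : Fin l → ℤ) ∈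
        AddSubgroup.closure (BRootsZ l) ∧
    -- … and `(V(2ω₁) ⊗ V(2ω₁) ⊗ V(2ω₁))^G ≠ 0` (saturation hypothesis at `m = 2`) …
    (∀ (U : Type) (_ : AddCommGroup U), ∀ (_ : Module ℂ U) (_ : FiniteDimensional ℂ U)
        (ρ : Representation ℂ G U),
        RepIsIrred ρ → BOccurs ρ (fun i => if (i : ℕ) = 0 then 2 else 0) →
        RepHasInvariant (tensorRep2 ρ (tensorRep2 ρ ρ))) ∧
    -- … but `(V(ω₁) ⊗ V(ω₁) ⊗ V(ω₁))^G = 0`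
    ¬ RepHasInvariant (tensorRep2 std (tensorRep2 std std)) := by
  refine ⟨?_, ?_, not_repHasInvariant_stdRep_cube (by omega)⟩
  · exact AddSubgroup.zsmul_mem _ (AddSubgroup.subset_closure (.inr ⟨_, .inl rfl⟩)) 3
  · rintro U _ _ _ ρ hirr ⟨v, hv⟩
    have hl0 : 0 < l := by omega
    have hpair := isHyperbolicPairIn_single (lt_rev_of_lt (j := 0) hl0)
    have houter := outerBasis_succ (0 : Fin (2 * l + 1))
    rw [Fin.val_zero, outerBasis_zero] at hpair houter
    obtain ⟨a, ha, haa⟩ := exists_anisotropic_mem_perp_outerBasis (k := 0 + 1) hl0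
    rw [houter] at ha
    exact hpair.repHasInvariant_cube ha haa hirr hv.1
      (isLineEigenvector_of_bIsHWVector_smul_single hl0 (p := 2) hv)
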